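/- arXiv:1706.00392 — 2 statements merged into one kernel-verified Lean document; each statement's English description precedes it below -/
import Mathlib

section
/- For each positive integer ℓ, the number of primes p ≤ x with p > ℓ and φ(p−ℓ) = φ(p+ℓ) is o(π(x)); that is, #{p ≤ x : p prime, p > ℓ, φ(p−ℓ) = φ(p+ℓ)} / π(x) tends to 0 as x tends to infinity. -/
open Filter Topology

namespace PhiDiff

/-- squarefree integers up to `D` coprime to `m` -/
def sqf (m D : ℕ) : Finset ℕ :=
  (Finset.Icc 1 D).filter (fun k => Squarefree k ∧ Nat.Coprime k m)

lemma mem_sqf {m D k : ℕ} : k ∈ sqf m D ↔ (1 ≤ k ∧ k ≤ D) ∧ Squarefree k ∧ Nat.Coprime k m := by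
  simp [sqf]

lemma sqf_of_dvd {m D k d : ℕ} (hk : k ∈ sqf m D) (hd : d ∣ k) : d ∈ sqf m D := by
  rw [mem_sqf] at *
  obtain ⟨⟨h1, h2⟩, h3, h4⟩ := hk
  exact ⟨⟨Nat.pos_of_dvd_of_pos hd h1, (Nat.le_of_dvd h1 hd).trans h2⟩,
    h3.squarefree_of_dvd hd, h4.coprime_dvd_left hd⟩

/-- the Selberg sum -/
noncomputable def G (m D : ℕ) : ℝ := ∑ k ∈ sqf m D, 1 / (Nat.totient k : ℝ)

noncomputable def uu (m D k : ℕ) : ℝ :=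
  (ArithmeticFunction.moebius k : ℝ) * (1 / (Nat.totient k : ℝ)) / G m D

noncomputable def lam (m D d : ℕ) : ℝ :=
  d * ∑ k ∈ (sqf m D).filter (fun k => d ∣ k),
    (ArithmeticFunction.moebius (k / d) : ℝ) * uu m D k

lemma totient_pos_of_mem {m D k : ℕ} (hk : k ∈ sqf m D) : (0 : ℝ) < Nat.totient k := by
  have := (mem_sqf.1 hk).1.1
  exact_mod_cast Nat.totient_pos.2 this

lemma one_mem_sqf {m D : ℕ} (hD : 1 ≤ D) : 1 ∈ sqf m D := by
  rw [mem_sqf]; simp [hD]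

lemma G_pos {m D : ℕ} (hD : 1 ≤ D) : 0 < G m D :=
  Finset.sum_pos (fun _ hk => one_div_pos.2 (totient_pos_of_mem hk)) ⟨1, one_mem_sqf hD⟩

lemma moebius_sq_cast {k : ℕ} (hk : Squarefree k) :
    ((ArithmeticFunction.moebius k : ℤ) : ℝ) * (ArithmeticFunction.moebius k : ℝ) = 1 := by
  have := ArithmeticFunction.moebius_sq_eq_one_of_squarefree hk
  rw [sq] at this
  exact_mod_cast this

lemma lam_one {m D : ℕ} (hD : 1 ≤ D) : lam m D 1 = 1 := by
  have hG := (G_pos (m := m) hD).ne'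
  have : ∀ k ∈ sqf m D, (ArithmeticFunction.moebius (k / 1) : ℝ) * uu m D k
      = (1 / (Nat.totient k : ℝ)) / G m D := by
    intro k hk
    rw [uu, Nat.div_one, ← mul_div_assoc, ← mul_assoc, moebius_sq_cast (mem_sqf.1 hk).2.1, one_mul]
  simp only [lam, one_dvd, Finset.filter_true]
  rw [Finset.sum_congr rfl this, ← Finset.sum_div]
  change ((1 : ℕ) : ℝ) * (G m D / G m D) = 1
  rw [div_self hG]; simp

lemma abs_moebius_cast_le (n : ℕ) : |(ArithmeticFunction.moebius n : ℝ)| ≤ 1 := by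
  have := ArithmeticFunction.abs_moebius_le_one (n := n)
  exact_mod_cast this

lemma abs_lam_le {m D d : ℕ} (hD : 1 ≤ D) : |lam m D d| ≤ d := by
  have hG := G_pos (m := m) hD
  rw [lam, abs_mul, Nat.abs_cast]
  have h : |∑ k ∈ (sqf m D).filter (fun k => d ∣ k),
    (ArithmeticFunction.moebius (k / d) : ℝ) * uu m D k| ≤ 1 := by
    refine (Finset.abs_sum_le_sum_abs _ _).trans ?_
    calc _ ≤ ∑ k ∈ (sqf m D).filter (fun k => d ∣ k), (1 / (Nat.totient k : ℝ)) / G m D := by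
          refine Finset.sum_le_sum fun k hk => ?_
          have hk' := totient_pos_of_mem (Finset.mem_filter.1 hk).1
          have hp : 0 ≤ (1 / (Nat.totient k : ℝ)) / G m D := by positivity
          rw [uu, abs_mul, mul_div_assoc, abs_mul, abs_of_nonneg hp]
          have h1 := abs_moebius_cast_le (k / d)
          have h2 := abs_moebius_cast_le k
          calc _ ≤ 1 * (1 * (1 / (Nat.totient k : ℝ) / G m D)) := by gcongr
            _ = _ := by ring
      _ ≤ ∑ k ∈ sqf m D, (1 / (Nat.totient k : ℝ)) / G m D := by
          refine Finset.sum_le_sum_of_subset_of_nonneg (Finset.filter_subset _ _) fun k hk _ => ?_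
          have hk' := totient_pos_of_mem hk
          positivity
      _ = 1 := by
          rw [← Finset.sum_div]
          exact div_self hG.ne'
  calc (d : ℝ) * _ ≤ d * 1 := by gcongr
    _ = d := mul_one _

lemma sum_moebius_between {j k : ℕ} (hk : k ≠ 0) (S : Finset ℕ)
    (hS : ∀ d, d ∈ S ↔ j ∣ d ∧ d ∣ k) :
    ∑ d ∈ S, (ArithmeticFunction.moebius (k / d) : ℝ) = if j = k then 1 else 0 := by
  by_cases hjk : j ∣ k
  · obtain ⟨e, rfl⟩ := hjk
    have hj : j ≠ 0 := left_ne_zero_of_mul hk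
    have he : e ≠ 0 := right_ne_zero_of_mul hk
    have h1 : ∑ d ∈ S, (ArithmeticFunction.moebius (j * e / d) : ℝ)
        = ∑ i ∈ e.divisors, (ArithmeticFunction.moebius i : ℝ) := by
      refine Finset.sum_bij' (fun d _ => j * e / d) (fun i _ => j * e / i) ?_ ?_ ?_ ?_ ?_
      · intro d hd
        obtain ⟨⟨c, rfl⟩, h2⟩ := (hS d).1 hd
        rw [Nat.mem_divisors]
        refine ⟨?_, he⟩
        have h3 : c ∣ e := Nat.dvd_of_mul_dvd_mul_left (Nat.pos_of_ne_zero hj) h2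
        rw [Nat.mul_div_mul_left _ _ (Nat.pos_of_ne_zero hj)]
        exact Nat.div_dvd_of_dvd h3
      · intro i hi
        have hi' := (Nat.mem_divisors.1 hi).1
        rw [hS]
        refine ⟨?_, Nat.div_dvd_of_dvd (hi'.mul_left j)⟩
        rw [Nat.mul_div_assoc _ hi']
        exact dvd_mul_right _ _
      · intro d hd
        exact Nat.div_div_self ((hS d).1 hd).2 hk
      · intro i hi
        exact Nat.div_div_self (((Nat.mem_divisors.1 hi).1).mul_left j) hk
      · intro d hd; rfl
    rw [h1]
    have h2 : ∑ i ∈ e.divisors, ArithmeticFunction.moebius i = if e = 1 then 1 else 0 := by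
      rw [← ArithmeticFunction.coe_mul_zeta_apply, ArithmeticFunction.moebius_mul_coe_zeta,
        ArithmeticFunction.one_apply]
    have h3 : ∑ i ∈ e.divisors, (ArithmeticFunction.moebius i : ℝ) = if e = 1 then 1 else 0 := by
      exact_mod_cast h2
    rw [h3]
    by_cases he1 : e = 1
    · simp [he1]
    · have : ¬ (j = j * e) := by
        intro h
        exact he1 (Nat.eq_of_mul_eq_mul_left (Nat.pos_of_ne_zero hj) (by omega))
      simp [he1, this]
  · have : S = ∅ := by
      rw [Finset.eq_empty_iff_forall_notMem]
      intro d hd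
      exact hjk (((hS d).1 hd).1.trans ((hS d).1 hd).2)
    have h2 : j ≠ k := fun h => hjk (h ▸ dvd_rfl)
    simp [this, h2]

lemma sum_lam_div {m D j : ℕ} (hj : j ∈ sqf m D) :
    ∑ d ∈ (sqf m D).filter (fun d => j ∣ d), lam m D d / d = uu m D j := by
  have h1 : ∀ d ∈ (sqf m D).filter (fun d => j ∣ d), lam m D d / d
      = ∑ k ∈ sqf m D, if d ∣ k then (ArithmeticFunction.moebius (k / d) : ℝ) * uu m D k else 0 := by
    intro d hd
    have hd0 : (d : ℝ) ≠ 0 := by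
      have := (mem_sqf.1 (Finset.mem_filter.1 hd).1).1.1
      positivity
    rw [lam, mul_div_cancel_left₀ _ hd0, Finset.sum_filter]
  rw [Finset.sum_congr rfl h1, Finset.sum_comm]
  have h2 : ∀ k ∈ sqf m D, (∑ d ∈ (sqf m D).filter (fun d => j ∣ d),
      if d ∣ k then (ArithmeticFunction.moebius (k / d) : ℝ) * uu m D k else 0)
      = if j = k then uu m D k else 0 := by
    intro k hk
    rw [← Finset.sum_filter, ← Finset.sum_mul, sum_moebius_between (j := j)]
    · split_ifs <;> simp
    · have := (mem_sqf.1 hk).1.1; omega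
    · intro d
      simp only [Finset.mem_filter]
      constructor
      · rintro ⟨⟨_, h⟩, h'⟩; exact ⟨h, h'⟩
      · rintro ⟨h, h'⟩; exact ⟨⟨sqf_of_dvd hk h', h⟩, h'⟩
  rw [Finset.sum_congr rfl h2]
  simp [hj]

lemma quad_form {m D : ℕ} (hD : 1 ≤ D) :
    ∑ d ∈ sqf m D, ∑ e ∈ sqf m D, lam m D d * lam m D e / (Nat.lcm d e : ℝ) = 1 / G m D := by
  have hG := (G_pos (m := m) hD).ne'
  have h1 : ∀ d ∈ sqf m D, ∀ e ∈ sqf m D, lam m D d * lam m D e / (Nat.lcm d e : ℝ)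
      = ∑ j ∈ sqf m D, (Nat.totient j : ℝ) *
        ((if j ∣ d then lam m D d / d else 0) * (if j ∣ e then lam m D e / e else 0)) := by
    intro d hd e he
    have hd0 := (mem_sqf.1 hd).1.1
    have he0 := (mem_sqf.1 he).1.1
    have hg : ((Nat.gcd d e : ℕ) : ℝ) = ∑ j ∈ sqf m D, if j ∣ d ∧ j ∣ e then (Nat.totient j : ℝ) else 0 := by
      rw [← Finset.sum_filter]
      have := Nat.sum_totient (Nat.gcd d e)
      conv_lhs => rw [← this]
      push_cast
      refine Finset.sum_congr ?_ fun _ _ => rfl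
      ext j
      simp only [Nat.mem_divisors, Finset.mem_filter, Nat.dvd_gcd_iff]
      constructor
      · rintro ⟨h, _⟩; exact ⟨sqf_of_dvd hd h.1, h⟩
      · rintro ⟨_, h⟩
        exact ⟨h, (Nat.gcd_pos_of_pos_left _ hd0).ne'⟩
    have hl : ((Nat.lcm d e : ℕ) : ℝ) * (Nat.gcd d e : ℕ) = d * e := by
      have := Nat.gcd_mul_lcm d e
      rw [mul_comm] at this
      exact_mod_cast this
    have hl0 : ((Nat.lcm d e : ℕ) : ℝ) ≠ 0 := by
      have := Nat.lcm_pos hd0 he0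
      positivity
    have hd1 : (d : ℝ) ≠ 0 := by positivity
    have he1 : (e : ℝ) ≠ 0 := by positivity
    have : lam m D d * lam m D e / (Nat.lcm d e : ℝ) = (Nat.gcd d e : ℕ) * ((lam m D d / d) * (lam m D e / e)) := by
      field_simp
      linear_combination (-lam m D d * lam m D e) * hl
    rw [this, hg, Finset.sum_mul]
    refine Finset.sum_congr rfl fun j _ => ?_
    by_cases ha : j ∣ d <;> by_cases hb : j ∣ e <;> simp [ha, hb]
  rw [Finset.sum_congr rfl fun d hd => Finset.sum_congr rfl fun e he => h1 d hd e he]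
  have h2 : ∀ d ∈ sqf m D, (∑ e ∈ sqf m D, ∑ j ∈ sqf m D, (Nat.totient j : ℝ) *
        ((if j ∣ d then lam m D d / d else 0) * (if j ∣ e then lam m D e / e else 0)))
      = ∑ j ∈ sqf m D, ∑ e ∈ sqf m D, (Nat.totient j : ℝ) *
        ((if j ∣ d then lam m D d / d else 0) * (if j ∣ e then lam m D e / e else 0)) :=
    fun d _ => Finset.sum_comm
  rw [Finset.sum_congr rfl h2, Finset.sum_comm]
  have h3 : ∀ j ∈ sqf m D, (∑ d ∈ sqf m D, ∑ e ∈ sqf m D, (Nat.totient j : ℝ) *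
        ((if j ∣ d then lam m D d / d else 0) * (if j ∣ e then lam m D e / e else 0)))
      = 1 / (Nat.totient j : ℝ) / (G m D) ^ 2 := by
    intro j hj
    have h4 : (∑ d ∈ sqf m D, ∑ e ∈ sqf m D, (Nat.totient j : ℝ) *
        ((if j ∣ d then lam m D d / d else 0) * (if j ∣ e then lam m D e / e else 0)))
        = Nat.totient j * (uu m D j * uu m D j) := by
      rw [← sum_lam_div hj, Finset.sum_filter, Finset.sum_mul_sum, Finset.mul_sum]
      simp_rw [Finset.mul_sum]
    rw [h4]
    have h5 := moebius_sq_cast (mem_sqf.1 hj).2.1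
    have h6 := (totient_pos_of_mem hj).ne'
    rw [uu]
    field_simp
    linear_combination h5
  rw [Finset.sum_congr rfl h3, ← Finset.sum_div]
  change G m D / (G m D) ^ 2 = _
  field_simp

end PhiDiff

namespace PhiDiff

lemma abs_count_sub_le (X r v : ℕ) (hr : 0 < r) :
    |(((Finset.range X).filter (fun n => n ≡ v [MOD r])).card : ℝ) - X / r| ≤ 1 := by
  have h := Nat.count_modEq_card X hr v
  rw [Nat.count_eq_card_filter_range] at h
  rw [h]
  have hr' : (0 : ℝ) < r := by exact_mod_cast hr
  have h1 : ((X / r : ℕ) : ℝ) * r + (X % r : ℕ) = X := by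
    exact_mod_cast Nat.div_add_mod' X r
  have h2 : ((X % r : ℕ) : ℝ) < r := by exact_mod_cast Nat.mod_lt X hr
  have h3 : (0 : ℝ) ≤ ((X % r : ℕ) : ℝ) := by positivity
  have h4 : (X : ℝ) / r = (X / r : ℕ) + ((X % r : ℕ) : ℝ) / r := by
    field_simp; linarith
  have h5 : ((X % r : ℕ) : ℝ) / r ≤ 1 := by rw [div_le_one hr']; exact h2.le
  have h6 : 0 ≤ ((X % r : ℕ) : ℝ) / r := by positivity
  rw [h4, abs_le]
  push_cast
  split_ifs <;> constructor <;> linarith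

lemma abs_count_dvd_sub_le (X m a L : ℕ) (hm : 0 < m) (hL : 0 < L) (hc : Nat.Coprime m L) :
    |(((Finset.range X).filter (fun n => n ≡ a [MOD m] ∧ L ∣ n)).card : ℝ) - X / (m * L)| ≤ 1 := by
  obtain ⟨v, hv1, hv2⟩ := Nat.chineseRemainder hc a 0
  have h : (Finset.range X).filter (fun n => n ≡ a [MOD m] ∧ L ∣ n)
      = (Finset.range X).filter (fun n => n ≡ v [MOD (m * L)]) := by
    refine Finset.filter_congr fun n _ => ?_
    rw [← Nat.modEq_and_modEq_iff_modEq_mul hc, ← Nat.modEq_zero_iff_dvd]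
    exact ⟨fun h => ⟨h.1.trans hv1.symm, h.2.trans hv2.symm⟩,
      fun h => ⟨h.1.trans hv1, h.2.trans hv2⟩⟩
  rw [h]
  have := abs_count_sub_le X (m * L) v (Nat.mul_pos hm hL)
  push_cast at this
  exact this

lemma selberg (X m a D : ℕ) (hm : 0 < m) (hD : 1 ≤ D) (A : Finset ℕ)
    (hA : ∀ n ∈ A, n < X ∧ n ≡ a [MOD m] ∧ ∀ q : ℕ, q.Prime → q ≤ D → ¬ q ∣ n) :
    (A.card : ℝ) ≤ X / (m * G m D) + (D : ℝ) ^ 4 := by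
  set B := (Finset.range X).filter (fun n => n ≡ a [MOD m]) with hB
  have hAB : A ⊆ B := by
    intro n hn
    exact Finset.mem_filter.2 ⟨Finset.mem_range.2 (hA n hn).1, (hA n hn).2.1⟩
  have h1 : (A.card : ℝ) ≤ ∑ n ∈ B, (∑ d ∈ sqf m D, if d ∣ n then lam m D d else 0) ^ 2 := by
    calc (A.card : ℝ) = ∑ n ∈ A, (1 : ℝ) := by simp
      _ = ∑ n ∈ A, (∑ d ∈ sqf m D, if d ∣ n then lam m D d else 0) ^ 2 := by
          refine Finset.sum_congr rfl fun n hn => ?_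
          have hn2 := (hA n hn).2.2
          rw [Finset.sum_eq_single 1]
          · simp [lam_one hD]
          · intro d hd hd1
            rw [if_neg]
            intro hdn
            obtain ⟨q, hq, hqd⟩ := Nat.exists_prime_and_dvd hd1
            have hd2 := (mem_sqf.1 hd).1
            exact hn2 q hq ((Nat.le_of_dvd hd2.1 hqd).trans hd2.2) (hqd.trans hdn)
          · intro h; exact absurd (one_mem_sqf hD) h
      _ ≤ _ := Finset.sum_le_sum_of_subset_of_nonneg hAB fun _ _ _ => sq_nonneg _
  have h2 : ∑ n ∈ B, (∑ d ∈ sqf m D, if d ∣ n then lam m D d else 0) ^ 2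
      = ∑ d ∈ sqf m D, ∑ e ∈ sqf m D, lam m D d * lam m D e *
        (((Finset.range X).filter (fun n => n ≡ a [MOD m] ∧ Nat.lcm d e ∣ n)).card : ℝ) := by
    have : ∀ n ∈ B, (∑ d ∈ sqf m D, if d ∣ n then lam m D d else 0) ^ 2
        = ∑ d ∈ sqf m D, ∑ e ∈ sqf m D, if Nat.lcm d e ∣ n then lam m D d * lam m D e else 0 := by
      intro n _
      rw [sq, Finset.sum_mul_sum]
      refine Finset.sum_congr rfl fun d _ => Finset.sum_congr rfl fun e _ => ?_
      have : Nat.lcm d e ∣ n ↔ d ∣ n ∧ e ∣ n := Nat.lcm_dvd_iff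
      by_cases ha : d ∣ n <;> by_cases hb : e ∣ n <;> simp [ha, hb, this]
    rw [Finset.sum_congr rfl this, Finset.sum_comm]
    refine Finset.sum_congr rfl fun d _ => ?_
    rw [Finset.sum_comm]
    refine Finset.sum_congr rfl fun e _ => ?_
    rw [← Finset.sum_filter, Finset.sum_const, hB, Finset.filter_filter, nsmul_eq_mul, mul_comm]
  have h3 : ∑ d ∈ sqf m D, ∑ e ∈ sqf m D, lam m D d * lam m D e *
        (((Finset.range X).filter (fun n => n ≡ a [MOD m] ∧ Nat.lcm d e ∣ n)).card : ℝ)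
      ≤ ∑ d ∈ sqf m D, ∑ e ∈ sqf m D,
        ((X : ℝ) / m * (lam m D d * lam m D e / (Nat.lcm d e : ℝ)) + (D : ℝ) * D) := by
    refine Finset.sum_le_sum fun d hd => Finset.sum_le_sum fun e he => ?_
    obtain ⟨⟨hd1, hd2⟩, -, hd3⟩ := mem_sqf.1 hd
    obtain ⟨⟨he1, he2⟩, -, he3⟩ := mem_sqf.1 he
    have hL := Nat.lcm_pos hd1 he1
    have hc : Nat.Coprime m (Nat.lcm d e) :=
      (Nat.Coprime.coprime_dvd_left (Nat.lcm_dvd_mul d e) (Nat.Coprime.mul_left hd3 he3)).symm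
    have h4 := abs_count_dvd_sub_le X m a _ hm hL hc
    set c := (((Finset.range X).filter (fun n => n ≡ a [MOD m] ∧ Nat.lcm d e ∣ n)).card : ℝ)
    have h5 : lam m D d * lam m D e * (c - X / (m * (Nat.lcm d e : ℕ))) ≤ D * D := by
      refine (le_abs_self _).trans ?_
      rw [abs_mul, abs_mul]
      have h6 : |lam m D d| ≤ D := (abs_lam_le hD).trans (by exact_mod_cast hd2)
      have h7 : |lam m D e| ≤ D := (abs_lam_le hD).trans (by exact_mod_cast he2)
      calc _ ≤ (D : ℝ) * D * 1 := by gcongr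
        _ = _ := mul_one _
    have h8 : (X : ℝ) / m * (lam m D d * lam m D e / (Nat.lcm d e : ℝ))
        = lam m D d * lam m D e * (X / (m * (Nat.lcm d e : ℕ))) := by
      rw [div_mul_div_comm]; ring
    rw [h8]
    linarith
  have h4 : ∑ d ∈ sqf m D, ∑ e ∈ sqf m D,
        ((X : ℝ) / m * (lam m D d * lam m D e / (Nat.lcm d e : ℝ)) + (D : ℝ) * D)
      ≤ X / (m * G m D) + (D : ℝ) ^ 4 := by
    simp only [Finset.sum_add_distrib, ← Finset.mul_sum, quad_form hD, Finset.sum_const,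
      nsmul_eq_mul]
    have hcard : ((sqf m D).card : ℝ) ≤ D := by
      have : (sqf m D).card ≤ (Finset.Icc 1 D).card := Finset.card_filter_le _ _
      rw [Nat.card_Icc] at this
      exact_mod_cast this
    have h5 : ((sqf m D).card : ℝ) * ((sqf m D).card * ((D : ℝ) * D)) ≤ D * (D * (D * D)) := by
      gcongr
    have h6 : (X : ℝ) / m * (1 / G m D) = X / (m * G m D) := by
      rw [div_mul_div_comm, mul_one]
    rw [h6]
    have : (D : ℝ) ^ 4 = D * (D * (D * D)) := by ring
    linarith
  rw [h2] at h1
  exact h1.trans (h3.trans h4)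

/-- `n ↦ 1/n` as a monoid hom -/
noncomputable def invHom : ℕ →* ℝ where
  toFun n := (n : ℝ)⁻¹
  map_one' := by simp
  map_mul' a b := by push_cast; rw [mul_inv]

lemma sum_inv_primeFactors_eq (D : ℕ) (S : Finset ℕ) (hS : ∀ q ∈ S, q.Prime) :
    ∑ n ∈ (Finset.Icc 1 D).filter (fun n => n.primeFactors = S), (n : ℝ)⁻¹
      ≤ ∏ q ∈ S, ((q : ℝ) - 1)⁻¹ := by
  have key := (EulerProduct.summable_and_hasSum_factoredNumbers_prod_filter_prime_geometric
    (f := invHom) (fun {p} hp => by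
      change ‖((p : ℝ))⁻¹‖ < 1
      rw [norm_inv, Real.norm_natCast]
      exact inv_lt_one_of_one_lt₀ (by exact_mod_cast hp.one_lt)) S).2
  rw [Finset.filter_true_of_mem hS] at key
  set P := ∏ q ∈ S, q with hP
  have hP0 : (0 : ℝ) < P := by
    have : 0 < P := Finset.prod_pos fun q hq => (hS q hq).pos
    exact_mod_cast this
  have hprod : ∏ q ∈ S, ((q : ℝ) - 1)⁻¹ = (P : ℝ)⁻¹ * ∏ q ∈ S, (1 - invHom q)⁻¹ := by
    rw [hP]; push_cast
    rw [← Finset.prod_inv_distrib, ← Finset.prod_mul_distrib]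
    refine Finset.prod_congr rfl fun q hq => ?_
    have h1 : (1 : ℝ) < q := by exact_mod_cast (hS q hq).one_lt
    change _ = _ * (1 - (q : ℝ)⁻¹)⁻¹
    rw [← mul_inv, mul_sub, mul_one, mul_inv_cancel₀ (by positivity)]
  set F := (Finset.Icc 1 D).filter (fun n => n.primeFactors = S) with hF
  have hdvd : ∀ n ∈ F, P ∣ n := by
    intro n hn
    have := (Finset.mem_filter.1 hn).2
    rw [hP, ← this]
    exact Nat.prod_primeFactors_dvd n
  have hmem : ∀ n ∈ F, n / P ∈ Nat.factoredNumbers S := by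
    intro n hn
    have h1 := (Finset.mem_filter.1 hn).2
    have h2 := (Finset.mem_Icc.1 (Finset.mem_filter.1 hn).1).1
    refine Nat.mem_factoredNumbers_of_dvd
      (Nat.mem_factoredNumbers_of_primeFactors_subset (by omega) h1.subset) (k := n / P) ?_
    exact Nat.div_dvd_of_dvd (hdvd n hn)
  rw [hprod]
  have h1 : ∑ n ∈ F, (n : ℝ)⁻¹ = (P : ℝ)⁻¹ * ∑ n ∈ F, ((n / P : ℕ) : ℝ)⁻¹ := by
    rw [Finset.mul_sum]
    refine Finset.sum_congr rfl fun n hn => ?_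
    rw [← mul_inv]
    congr 1
    exact_mod_cast (Nat.mul_div_cancel' (hdvd n hn)).symm
  rw [h1]
  refine mul_le_mul_of_nonneg_left ?_ (by positivity)
  let em : {n // n ∈ F} → Nat.factoredNumbers S := fun n => ⟨n.1 / P, hmem n.1 n.2⟩
  have hinj : Function.Injective em := by
    intro n n' h
    have h' : n.1 / P = n'.1 / P := congrArg Subtype.val h
    ext
    rw [← Nat.mul_div_cancel' (hdvd _ n.2), h', Nat.mul_div_cancel' (hdvd _ n'.2)]
  have h2 : ∑ n ∈ F, ((n / P : ℕ) : ℝ)⁻¹ = ∑ k ∈ F.attach.map ⟨em, hinj⟩, invHom k := by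
    rw [Finset.sum_map, ← Finset.sum_attach]
    rfl
  rw [h2]
  exact sum_le_hasSum _ (fun i _ => by change (0 : ℝ) ≤ (((i : ℕ) : ℝ))⁻¹; positivity) key

lemma inv_totient_eq {k : ℕ} (hk : Squarefree k) :
    1 / (Nat.totient k : ℝ) = ∏ q ∈ k.primeFactors, ((q : ℝ) - 1)⁻¹ := by
  have h := Nat.totient_mul_prod_primeFactors k
  rw [Nat.prod_primeFactors_of_squarefree hk] at h
  have hk0 := Nat.pos_of_ne_zero hk.ne_zero
  have h2 : Nat.totient k = ∏ p ∈ k.primeFactors, (p - 1) := by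
    rw [mul_comm] at h
    exact Nat.eq_of_mul_eq_mul_left hk0 h
  rw [h2, Finset.prod_inv_distrib, one_div]
  push_cast
  congr 1
  refine Finset.prod_congr rfl fun q hq => ?_
  rw [Nat.cast_sub (Nat.prime_of_mem_primeFactors hq).one_le]; simp

lemma log_le_G (m D : ℕ) (hm : 0 < m) :
    Real.log D ≤ G m D * (m / Nat.totient m) := by
  have hD : Real.log D ≤ ∑ n ∈ Finset.Icc 1 D, (n : ℝ)⁻¹ := by
    rcases Nat.eq_zero_or_pos D with h | h
    · simp [h]
    have h1 := log_add_one_le_harmonic D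
    rw [harmonic_eq_sum_Icc] at h1
    push_cast at h1
    refine le_trans (Real.log_le_log (by exact_mod_cast h) ?_) h1
    linarith
  refine hD.trans ?_
  let f : ℕ → ℕ × Finset ℕ := fun n =>
    (∏ q ∈ n.primeFactors \ m.primeFactors, q, n.primeFactors ∩ m.primeFactors)
  have hpr : ∀ n : ℕ, (∏ q ∈ n.primeFactors \ m.primeFactors, q).primeFactors
      = n.primeFactors \ m.primeFactors := fun n => Nat.primeFactors_prod
      fun q hq => Nat.prime_of_mem_primeFactors (Finset.mem_sdiff.1 hq).1
  have hmaps : ∀ n ∈ Finset.Icc 1 D, f n ∈ sqf m D ×ˢ m.primeFactors.powerset := by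
    intro n hn
    rw [Finset.mem_Icc] at hn
    have hdv : (∏ q ∈ n.primeFactors \ m.primeFactors, q) ∣ n :=
      (Finset.prod_dvd_prod_of_subset _ _ _ Finset.sdiff_subset).trans
        (Nat.prod_primeFactors_dvd n)
    have hpos := Nat.pos_of_dvd_of_pos hdv hn.1
    refine Finset.mem_product.2 ⟨mem_sqf.2 ⟨⟨hpos, (Nat.le_of_dvd hn.1 hdv).trans hn.2⟩, ?_, ?_⟩, ?_⟩
    · have : Squarefree (∏ q ∈ n.primeFactors, q) := by
        rw [← Nat.radical_eq_prod_primeFactors]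
        exact UniqueFactorizationMonoid.squarefree_radical (a := n)
      change Squarefree (∏ q ∈ n.primeFactors \ m.primeFactors, q)
      exact this.squarefree_of_dvd (Finset.prod_dvd_prod_of_subset _ _ _ Finset.sdiff_subset)
    · change Nat.Coprime (∏ q ∈ n.primeFactors \ m.primeFactors, q) m
      refine Nat.Coprime.prod_left fun q hq => ?_
      have h1 := Finset.mem_sdiff.1 hq
      have hq' := Nat.prime_of_mem_primeFactors h1.1
      rw [hq'.coprime_iff_not_dvd]
      intro h
      exact h1.2 (Nat.mem_primeFactors.2 ⟨hq', h, hm.ne'⟩)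
    · exact Finset.mem_powerset.2 Finset.inter_subset_right
  rw [← Finset.sum_fiberwise_of_maps_to hmaps]
  have hb : ∀ kT ∈ sqf m D ×ˢ m.primeFactors.powerset,
      ∑ n ∈ (Finset.Icc 1 D).filter (fun n => f n = kT), (n : ℝ)⁻¹
      ≤ (1 / (Nat.totient kT.1 : ℝ)) * ∏ q ∈ kT.2, ((q : ℝ) - 1)⁻¹ := by
    rintro ⟨k, T⟩ hkT
    obtain ⟨hk, hT⟩ := Finset.mem_product.1 hkT
    simp only at hk hT
    rw [Finset.mem_powerset] at hT
    have hdisj : Disjoint k.primeFactors T := by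
      refine Finset.disjoint_of_subset_right hT ?_
      exact (Nat.Coprime.disjoint_primeFactors (mem_sqf.1 hk).2.2)
    rw [inv_totient_eq (mem_sqf.1 hk).2.1, ← Finset.prod_union hdisj]
    refine le_trans ?_ (sum_inv_primeFactors_eq D (k.primeFactors ∪ T) ?_)
    · refine Finset.sum_le_sum_of_subset_of_nonneg ?_ fun _ _ _ => by positivity
      intro n hn
      rw [Finset.mem_filter] at hn ⊢
      refine ⟨hn.1, ?_⟩
      have h1 := hn.2
      simp only [f, Prod.mk.injEq] at h1
      rw [← h1.1, ← h1.2, hpr]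
      exact (Finset.sdiff_union_inter _ _).symm
    · intro q hq
      rcases Finset.mem_union.1 hq with h | h
      · exact Nat.prime_of_mem_primeFactors h
      · exact Nat.prime_of_mem_primeFactors (hT h)
  refine (Finset.sum_le_sum hb).trans ?_
  rw [Finset.sum_product, G, Finset.sum_mul]
  refine Finset.sum_le_sum fun k hk => ?_
  simp only
  rw [← Finset.mul_sum]
  refine mul_le_mul_of_nonneg_left (le_of_eq ?_) (by positivity)
  rw [← Finset.prod_one_add]
  have h := Nat.totient_eq_mul_prod_factors m
  have h' : ((Nat.totient m : ℕ) : ℝ) = m * ∏ p ∈ m.primeFactors, (1 - (p : ℝ)⁻¹) := by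
    have h2 := congrArg (fun t : ℚ => (t : ℝ)) h
    push_cast at h2
    exact h2
  have hm' : (m : ℝ) ≠ 0 := by positivity
  rw [h', div_mul_eq_div_div, div_self hm', one_div, ← Finset.prod_inv_distrib]
  refine Finset.prod_congr rfl fun q hq => ?_
  have h1 : (1 : ℝ) < q := by exact_mod_cast (Nat.prime_of_mem_primeFactors hq).one_lt
  have h2 : (q : ℝ) - 1 ≠ 0 := by linarith
  have h3 : (q : ℝ) ≠ 0 := by linarith
  field_simp
  ring

end PhiDiff

namespace PhiDiff

lemma brun_titchmarsh (X m a : ℕ) (hX : 256 ≤ X) (hm : 0 < m) (A : Finset ℕ)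
    (hA : ∀ p ∈ A, p.Prime ∧ p < X ∧ p ≡ a [MOD m]) :
    (A.card : ℝ) ≤ 16 * X / (Nat.totient m * Real.log X) + 2 * Real.sqrt X := by
  set D := Nat.sqrt (Nat.sqrt (Nat.sqrt X)) with hDdef
  have hD2 : 2 ≤ D := by
    rw [hDdef, Nat.le_sqrt, Nat.le_sqrt, Nat.le_sqrt]; omega
  have hD8 : D ^ 4 * D ^ 4 ≤ X := by
    have h1 : D * D ≤ Nat.sqrt (Nat.sqrt X) := Nat.sqrt_le _
    have h2 := Nat.sqrt_le (Nat.sqrt X)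
    have h3 := Nat.sqrt_le X
    calc D ^ 4 * D ^ 4 = ((D * D) * (D * D)) * ((D * D) * (D * D)) := by ring
      _ ≤ (Nat.sqrt (Nat.sqrt X) * Nat.sqrt (Nat.sqrt X)) *
          (Nat.sqrt (Nat.sqrt X) * Nat.sqrt (Nat.sqrt X)) := by gcongr
      _ ≤ Nat.sqrt X * Nat.sqrt X := by gcongr
      _ ≤ X := h3
  have hX16 : X ≤ D ^ 16 := by
    have h1 : Nat.sqrt (Nat.sqrt X) < (D + 1) * (D + 1) :=
      Nat.lt_succ_sqrt _
    have h2 : Nat.sqrt X < (Nat.sqrt (Nat.sqrt X) + 1) * (Nat.sqrt (Nat.sqrt X) + 1) :=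
      Nat.lt_succ_sqrt _
    have h3 : X < (Nat.sqrt X + 1) * (Nat.sqrt X + 1) := Nat.lt_succ_sqrt _
    have hDD : D + 1 ≤ D * D := by nlinarith
    have h4 : Nat.sqrt (Nat.sqrt X) + 1 ≤ (D * D) * (D * D) :=
      (Nat.succ_le_of_lt h1).trans (Nat.mul_le_mul hDD hDD)
    have h5 : Nat.sqrt X + 1 ≤ ((D * D) * (D * D)) * ((D * D) * (D * D)) :=
      (Nat.succ_le_of_lt h2).trans (Nat.mul_le_mul h4 h4)
    calc X ≤ (((D * D) * (D * D)) * ((D * D) * (D * D))) * (((D * D) * (D * D)) * ((D * D) * (D * D))) :=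
          h3.le.trans (Nat.mul_le_mul h5 h5)
      _ = D ^ 16 := by ring
  have hXpos : (0 : ℝ) < X := by positivity
  have hD4 : (D : ℝ) ^ 4 ≤ Real.sqrt X := by
    apply Real.le_sqrt_of_sq_le
    rw [sq]; exact_mod_cast hD8
  have hDle : (D : ℝ) ≤ (D : ℝ) ^ 4 := by
    have : (1 : ℝ) ≤ D := by exact_mod_cast (by omega : 1 ≤ D)
    exact le_self_pow₀ this (by norm_num)
  have hlogX : Real.log X ≤ 16 * Real.log D := by
    have : Real.log X ≤ Real.log ((D : ℝ) ^ 16) :=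
      Real.log_le_log hXpos (by exact_mod_cast hX16)
    rw [Real.log_pow] at this
    exact_mod_cast this
  have hlogXpos : 0 < Real.log X := Real.log_pos (by exact_mod_cast (by omega : 1 < X))
  have hphi : (0 : ℝ) < Nat.totient m := by exact_mod_cast Nat.totient_pos.2 hm
  have hmpos : (0 : ℝ) < m := by exact_mod_cast hm
  have hG := G_pos (m := m) (by omega : 1 ≤ D)
  have hlG := log_le_G m D hm
  have h1 : ((A.filter (fun p => ¬ p ≤ D)).card : ℝ) ≤ X / (m * G m D) + (D : ℝ) ^ 4 := by
    refine selberg X m a D hm (by omega) _ fun p hp => ?_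
    obtain ⟨hpA, hpD⟩ := Finset.mem_filter.1 hp
    obtain ⟨hp1, hp2, hp3⟩ := hA p hpA
    refine ⟨hp2, hp3, fun q hq hqD hqp => ?_⟩
    have := (Nat.prime_dvd_prime_iff_eq hq hp1).1 hqp
    omega
  have h2 : ((A.filter (fun p => p ≤ D)).card : ℝ) ≤ D := by
    have : (A.filter (fun p => p ≤ D)) ⊆ Finset.Icc 1 D := by
      intro p hp
      obtain ⟨hpA, hpD⟩ := Finset.mem_filter.1 hp
      exact Finset.mem_Icc.2 ⟨(hA p hpA).1.one_le, hpD⟩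
    have := Finset.card_le_card this
    rw [Nat.card_Icc] at this
    exact_mod_cast this
  have h3 : (A.card : ℝ) = (A.filter (fun p => p ≤ D)).card + (A.filter (fun p => ¬ p ≤ D)).card := by
    exact_mod_cast (Finset.card_filter_add_card_filter_not (s := A) (fun p => p ≤ D)).symm
  have h4 : (X : ℝ) / (m * G m D) ≤ 16 * X / (Nat.totient m * Real.log X) := by
    rw [div_le_div_iff₀ (by positivity) (by positivity)]
    have h5 : Real.log D * Nat.totient m ≤ G m D * m := by
      have := mul_le_mul_of_nonneg_right hlG hphi.le
      rwa [mul_assoc, div_mul_cancel₀ _ hphi.ne'] at this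
    calc (X : ℝ) * (Nat.totient m * Real.log X) ≤ X * (Nat.totient m * (16 * Real.log D)) := by
          gcongr
      _ = 16 * X * (Real.log D * Nat.totient m) := by ring
      _ ≤ 16 * X * (G m D * m) := by gcongr
      _ = _ := by ring
  linarith

lemma trivial_count (X m a : ℕ) (hm : 0 < m) (A : Finset ℕ)
    (hA : ∀ p ∈ A, p < X ∧ p ≡ a [MOD m]) :
    (A.card : ℝ) ≤ X / m + 1 := by
  have h := abs_le.1 (abs_count_sub_le X m a hm)
  have h2 : A.card ≤ ((Finset.range X).filter (fun n => n ≡ a [MOD m])).card := by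
    refine Finset.card_le_card fun p hp => ?_
    exact Finset.mem_filter.2 ⟨Finset.mem_range.2 (hA p hp).1, (hA p hp).2⟩
  have h3 : (A.card : ℝ) ≤ ((Finset.range X).filter (fun n => n ≡ a [MOD m])).card := by
    exact_mod_cast h2
  linarith [h.2]

lemma tail_bound (X l y : ℕ) (hX : 256 ≤ X) (hl : l ≤ X) (hy : 1 ≤ y) (A : ℕ → Finset ℕ)
    (a : ℕ → ℕ) (hA : ∀ q, ∀ p ∈ A q, p.Prime ∧ p < X ∧ p ≡ a q [MOD q]) :
    ∑ q ∈ (Finset.Ioc y (X + l)).filter Nat.Prime, (1 / (q : ℝ)) * (A q).card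
      ≤ 32 * X / (y * Real.log X) + 10 * (X : ℝ) ^ (3 / 4 : ℝ) := by
  set w := Nat.sqrt (Nat.sqrt X) with hw
  have hw1 : 2 ≤ w := by
    rw [hw, Nat.le_sqrt, Nat.le_sqrt]; omega
  have hXpos : (0 : ℝ) < X := by positivity
  have hw4 : w ^ 4 ≤ X := by
    have h2 := Nat.sqrt_le (Nat.sqrt X)
    have h3 := Nat.sqrt_le X
    calc w ^ 4 = (w * w) * (w * w) := by ring
      _ ≤ Nat.sqrt X * Nat.sqrt X := by gcongr
      _ ≤ X := h3
  have hw5 : X ≤ (2 * w) ^ 4 := by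
    have h2 : Nat.sqrt X < (w + 1) * (w + 1) := Nat.lt_succ_sqrt _
    have h3 : X < (Nat.sqrt X + 1) * (Nat.sqrt X + 1) := Nat.lt_succ_sqrt _
    have h4 : Nat.sqrt X + 1 ≤ (2 * w) * (2 * w) :=
      (Nat.succ_le_of_lt h2).trans (Nat.mul_le_mul (by omega) (by omega))
    calc X ≤ ((2 * w) * (2 * w)) * ((2 * w) * (2 * w)) := h3.le.trans (Nat.mul_le_mul h4 h4)
      _ = _ := by ring
  set z := (X : ℝ) ^ (1 / 4 : ℝ) with hz
  have hzpos : 0 < z := Real.rpow_pos_of_pos hXpos _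
  have hz4 : z ^ 4 = X := by
    rw [hz, ← Real.rpow_natCast, ← Real.rpow_mul hXpos.le]; norm_num
  have hz3 : (X : ℝ) ^ (3 / 4 : ℝ) = z ^ 3 := by
    rw [hz, ← Real.rpow_natCast, ← Real.rpow_mul hXpos.le]; norm_num
  have hz2 : Real.sqrt X = z ^ 2 := by
    rw [← hz4, show z ^ 4 = (z ^ 2) ^ 2 by ring, Real.sqrt_sq (by positivity)]
  have hwz : (w : ℝ) ≤ z := by
    refine le_of_pow_le_pow_left₀ (n := 4) (by norm_num) hzpos.le ?_
    rw [hz4]; exact_mod_cast hw4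
  have hzw : z ≤ 2 * w := by
    refine le_of_pow_le_pow_left₀ (n := 4) (by norm_num) (by positivity) ?_
    rw [hz4]; exact_mod_cast hw5
  have hwX : w ≤ X := (Nat.sqrt_le_self _).trans (Nat.sqrt_le_self _)
  have hlogXpos : 0 < Real.log X := Real.log_pos (by exact_mod_cast (by omega : 1 < X))
  have hypos : (0 : ℝ) < y := by exact_mod_cast hy
  have hwpos : (0 : ℝ) < w := by positivity
  have hpt : ∀ q ∈ (Finset.Ioc y (X + l)).filter Nat.Prime, (1 / (q : ℝ)) * (A q).card
      ≤ 32 * X / Real.log X * ((q : ℝ) ^ 2)⁻¹ + (if q ∈ Finset.Icc 1 w then 2 * Real.sqrt X else 0)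
        + (if q ∈ Finset.Ioc w (X + l) then 2 * ((X : ℝ) + l) * ((q : ℝ) ^ 2)⁻¹ else 0) := by
    intro q hq
    obtain ⟨hq1, hq2⟩ := Finset.mem_filter.1 hq
    rw [Finset.mem_Ioc] at hq1
    have hq0 : (0 : ℝ) < q := by exact_mod_cast hq2.pos
    have hq1' : (1 : ℝ) ≤ q := by exact_mod_cast hq2.one_le
    have hnn : 0 ≤ 32 * X / Real.log X * ((q : ℝ) ^ 2)⁻¹ := by positivity
    by_cases hqw : q ≤ w
    · rw [if_pos (Finset.mem_Icc.2 ⟨hq2.one_le, hqw⟩), if_neg (by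
        rw [Finset.mem_Ioc]; omega), add_zero]
      have h1 := brun_titchmarsh X q (a q) hX hq2.pos (A q) (hA q)
      rw [Nat.totient_prime hq2, Nat.cast_sub hq2.one_le, Nat.cast_one] at h1
      have hq2' : (2 : ℝ) ≤ q := by exact_mod_cast hq2.two_le
      have h2 : 16 * (X : ℝ) / ((q - 1) * Real.log X) ≤ 32 * X / (q * Real.log X) := by
        have : (0 : ℝ) < q - 1 := by linarith
        rw [div_le_div_iff₀ (by positivity) (by positivity)]
        have : 16 * (X : ℝ) * Real.log X * q ≤ 16 * X * Real.log X * (2 * (q - 1)) := by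
          gcongr; linarith
        nlinarith
      calc (1 / (q : ℝ)) * (A q).card ≤ (1 / (q : ℝ)) * (32 * X / (q * Real.log X) + 2 * Real.sqrt X) := by
            gcongr; linarith
        _ = 32 * X / Real.log X * ((q : ℝ) ^ 2)⁻¹ + (1 / q) * (2 * Real.sqrt X) := by
            field_simp
        _ ≤ 32 * X / Real.log X * ((q : ℝ) ^ 2)⁻¹ + 1 * (2 * Real.sqrt X) := by
            gcongr
            rw [div_le_one hq0]; exact hq1'
        _ = _ := by ring
    · rw [if_neg (by rw [Finset.mem_Icc]; omega), if_pos (Finset.mem_Ioc.2 ⟨by omega, hq1.2⟩),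
        add_zero]
      have h1 := trivial_count X q (a q) hq2.pos (A q) (fun p hp => (hA q p hp).2)
      have h2 : (1 : ℝ) ≤ (X + l) / q := by
        rw [le_div_iff₀ hq0, one_mul]; exact_mod_cast hq1.2
      have h3 : (X : ℝ) / q ≤ (X + l) / q := by gcongr; linarith [Nat.cast_nonneg (α := ℝ) l]
      have : (1 / (q : ℝ)) * (A q).card ≤ 2 * ((X : ℝ) + l) * ((q : ℝ) ^ 2)⁻¹ := by
        calc (1 / (q : ℝ)) * (A q).card ≤ (1 / (q : ℝ)) * (2 * ((X + l) / q)) := by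
              gcongr; linarith
          _ = _ := by field_simp
      linarith
  refine (Finset.sum_le_sum hpt).trans ?_
  rw [Finset.sum_add_distrib, Finset.sum_add_distrib, ← Finset.mul_sum]
  have hsub : (Finset.Ioc y (X + l)).filter Nat.Prime ⊆ Finset.Ioc y (X + l) :=
    Finset.filter_subset _ _
  have s1 : ∑ q ∈ (Finset.Ioc y (X + l)).filter Nat.Prime, ((q : ℝ) ^ 2)⁻¹ ≤ (y : ℝ)⁻¹ := by
    refine (Finset.sum_le_sum_of_subset_of_nonneg hsub fun _ _ _ => by positivity).trans ?_
    rcases le_total y (X + l) with h | h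
    · refine (sum_Ioc_inv_sq_le_sub (by omega) h).trans ?_
      have : (0 : ℝ) ≤ ((X + l : ℕ) : ℝ)⁻¹ := by positivity
      linarith
    · rw [Finset.Ioc_eq_empty (by omega)]; simp
  have s2 : ∑ q ∈ (Finset.Ioc y (X + l)).filter Nat.Prime,
      (if q ∈ Finset.Icc 1 w then 2 * Real.sqrt X else 0) ≤ w * (2 * Real.sqrt X) := by
    rw [← Finset.sum_filter, Finset.sum_const, nsmul_eq_mul]
    gcongr
    have : ((Finset.Ioc y (X + l)).filter Nat.Prime).filter (fun q => q ∈ Finset.Icc 1 w)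
        ⊆ Finset.Icc 1 w := fun q hq => (Finset.mem_filter.1 hq).2
    have := Finset.card_le_card this
    rwa [Nat.card_Icc] at this
  have s3 : ∑ q ∈ (Finset.Ioc y (X + l)).filter Nat.Prime,
      (if q ∈ Finset.Ioc w (X + l) then 2 * ((X : ℝ) + l) * ((q : ℝ) ^ 2)⁻¹ else 0)
      ≤ 2 * ((X : ℝ) + l) * (w : ℝ)⁻¹ := by
    rw [← Finset.sum_filter, ← Finset.mul_sum]
    gcongr
    have : ((Finset.Ioc y (X + l)).filter Nat.Prime).filter (fun q => q ∈ Finset.Ioc w (X + l))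
        ⊆ Finset.Ioc w (X + l) := fun q hq => (Finset.mem_filter.1 hq).2
    refine (Finset.sum_le_sum_of_subset_of_nonneg this fun _ _ _ => by positivity).trans ?_
    refine (sum_Ioc_inv_sq_le_sub (by omega) (by omega)).trans ?_
    have : (0 : ℝ) ≤ ((X + l : ℕ) : ℝ)⁻¹ := by positivity
    linarith
  have e1 : 32 * (X : ℝ) / Real.log X * (y : ℝ)⁻¹ = 32 * X / (y * Real.log X) := by
    field_simp
  have s1' := mul_le_mul_of_nonneg_left s1 (show 0 ≤ 32 * (X : ℝ) / Real.log X by positivity)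
  rw [e1] at s1'
  have e2 : (w : ℝ) * (2 * Real.sqrt X) ≤ 2 * z ^ 3 := by
    rw [hz2]; nlinarith [mul_le_mul_of_nonneg_right hwz (sq_nonneg z)]
  have e3 : 2 * ((X : ℝ) + l) * (w : ℝ)⁻¹ ≤ 8 * z ^ 3 := by
    rw [← div_eq_mul_inv, div_le_iff₀ hwpos]
    have hl' : (l : ℝ) ≤ X := by exact_mod_cast hl
    have : z ^ 3 * z ≤ z ^ 3 * (2 * w) := by gcongr
    nlinarith
  rw [hz3]
  linarith

end PhiDiff

namespace PhiDiff

/-- Littlewood and Offord (Erdos), positive weights. -/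
lemma lo_pos {α : Type*} [Fintype α] [DecidableEq α] (x : α → ℝ) (δ c : ℝ) (hδ : 0 < δ)
    (hx : ∀ i, δ ≤ x i) (F : Finset (Finset α))
    (hF : ∀ A ∈ F, |c + ∑ i, (if i ∈ A then x i else - x i)| < δ) :
    F.card ≤ (Fintype.card α).choose (Fintype.card α / 2) := by
  refine IsAntichain.sperner (𝒜 := F) ?_
  intro A hA A' hA' hne hsub
  have h1 := abs_lt.1 (hF A hA)
  have h2 := abs_lt.1 (hF A' hA')
  obtain ⟨j, hj', hj⟩ := Finset.exists_of_ssubset (Finset.ssubset_iff_subset_ne.2 ⟨hsub, hne⟩)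
  have h3 : ∑ i, (if i ∈ A then x i else - x i) + ∑ i, (if i = j then 2 * δ else 0)
      ≤ ∑ i, (if i ∈ A' then x i else - x i) := by
    rw [← Finset.sum_add_distrib]
    refine Finset.sum_le_sum fun i _ => ?_
    have hxi := hx i
    by_cases hij : i = j
    · subst hij
      simp only [hj, hj', if_true, if_false]; linarith
    · by_cases ha : i ∈ A
      · simp [ha, hsub ha, hij]
      · by_cases hb : i ∈ A'
        · simp only [ha, hb, hij, if_true, if_false]; linarith
        · simp [ha, hb, hij]
  rw [Finset.sum_ite_eq' Finset.univ j (fun _ => 2 * δ)] at h3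
  simp only [Finset.mem_univ, if_true] at h3
  linarith [h1.1, h2.2]

lemma lo_signed {α : Type*} [DecidableEq α] (T : Finset α) (x : α → ℝ) (δ c : ℝ) (hδ : 0 < δ)
    (hx : ∀ i ∈ T, x i ≠ 0 → δ ≤ |x i|) (F : Finset (Finset α))
    (hF : ∀ A ∈ F, A ⊆ T ∧ |c + ∑ i ∈ T, (if i ∈ A then - x i else x i)| < δ) :
    F.card ≤ 2 ^ (T.card - (T.filter (fun i => x i ≠ 0)).card) *
      ((T.filter (fun i => x i ≠ 0)).card).choose ((T.filter (fun i => x i ≠ 0)).card / 2) := by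
  set S := T.filter (fun i => x i ≠ 0) with hS
  have hST : S ⊆ T := Finset.filter_subset _ _
  have hxS : ∀ i ∈ S, δ ≤ |x i| := fun i hi =>
    hx i (Finset.mem_filter.1 hi).1 (Finset.mem_filter.1 hi).2
  let g : Finset α → Finset {i // i ∈ S} := fun A =>
    Finset.univ.filter (fun i => (i.1 ∈ A ∧ x i.1 < 0) ∨ (i.1 ∉ A ∧ 0 < x i.1))
  have hg : ∀ A A', g A = g A' → A ∩ S = A' ∩ S := by
    intro A A' h
    ext i
    simp only [Finset.mem_inter]
    refine and_congr_left fun hi => ?_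
    have h1 : (⟨i, hi⟩ : {i // i ∈ S}) ∈ g A ↔ (⟨i, hi⟩ : {i // i ∈ S}) ∈ g A' := by rw [h]
    simp only [g, Finset.mem_filter, Finset.mem_univ, true_and] at h1
    have h2 : x i ≠ 0 := (Finset.mem_filter.1 hi).2
    rcases lt_or_gt_of_ne h2 with h3 | h3
    · have h4 : ¬ 0 < x i := not_lt.2 h3.le
      simpa [h3, h4] using h1
    · have h4 : ¬ x i < 0 := not_lt.2 h3.le
      have : i ∉ A ↔ i ∉ A' := by simpa [h3, h4] using h1
      exact not_iff_not.1 this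
  have hsum : ∀ A, ∑ i ∈ T, (if i ∈ A then - x i else x i)
      = ∑ i : {i // i ∈ S}, (if i ∈ g A then |x i.1| else - |x i.1|) := by
    intro A
    have h1 : ∑ i ∈ T, (if i ∈ A then - x i else x i) = ∑ i ∈ S, (if i ∈ A then - x i else x i) := by
      symm
      refine Finset.sum_subset hST fun i hi hiS => ?_
      have : x i = 0 := by
        by_contra h
        exact hiS (Finset.mem_filter.2 ⟨hi, h⟩)
      simp [this]
    rw [h1, ← Finset.sum_coe_sort S]
    refine Finset.sum_congr rfl fun i _ => ?_
    have h2 : x i.1 ≠ 0 := (Finset.mem_filter.1 i.2).2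
    simp only [g, Finset.mem_filter, Finset.mem_univ, true_and]
    rcases lt_or_gt_of_ne h2 with h3 | h3
    · have h4 : ¬ 0 < x i.1 := not_lt.2 h3.le
      by_cases ha : i.1 ∈ A <;> simp [ha, h3, h4, abs_of_neg h3]
    · have h4 : ¬ x i.1 < 0 := not_lt.2 h3.le
      by_cases ha : i.1 ∈ A <;> simp [ha, h3, h4, abs_of_pos h3]
  have hcard : F.card ≤ ((T \ S).powerset ×ˢ F.image g).card := by
    refine Finset.card_le_card_of_injOn (fun A => (A \ S, g A)) ?_ ?_
    · intro A hA
      refine Finset.mem_product.2 ⟨Finset.mem_powerset.2 ?_, Finset.mem_image_of_mem _ hA⟩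
      exact Finset.sdiff_subset_sdiff (hF A hA).1 le_rfl
    · intro A hA A' hA' h
      simp only [Prod.mk.injEq] at h
      rw [← Finset.sdiff_union_inter A S, h.1, hg A A' h.2, Finset.sdiff_union_inter]
  rw [Finset.card_product, Finset.card_powerset, Finset.card_sdiff_of_subset hST] at hcard
  refine hcard.trans (Nat.mul_le_mul_left _ ?_)
  have := lo_pos (fun i : {i // i ∈ S} => |x i.1|) δ c hδ (fun i => hxS i.1 i.2) (F.image g) (by
    intro B hB
    obtain ⟨A, hA, rfl⟩ := Finset.mem_image.1 hB
    rw [← hsum]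
    exact (hF A hA).2)
  rwa [Fintype.card_coe] at this

/-- central binomial probability -/
noncomputable def kap (k : ℕ) : ℝ := (k.choose (k / 2) : ℝ) / 2 ^ k

lemma centralBinom_sq_le (n : ℕ) : (Nat.centralBinom n) ^ 2 * (2 * n + 1) ≤ 16 ^ n := by
  induction n with
  | zero => simp
  | succ n ih =>
    have h := Nat.succ_mul_centralBinom_succ n
    have hpos : 0 < (n + 1) ^ 2 := by positivity
    refine Nat.le_of_mul_le_mul_left ?_ hpos
    calc (n + 1) ^ 2 * ((Nat.centralBinom (n + 1)) ^ 2 * (2 * (n + 1) + 1))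
        = ((n + 1) * Nat.centralBinom (n + 1)) ^ 2 * (2 * n + 3) := by ring
      _ = (2 * (2 * n + 1) * Nat.centralBinom n) ^ 2 * (2 * n + 3) := by rw [h]
      _ = 4 * (2 * n + 1) * (2 * n + 3) * (Nat.centralBinom n ^ 2 * (2 * n + 1)) := by ring
      _ ≤ 4 * (2 * n + 1) * (2 * n + 3) * 16 ^ n := by gcongr
      _ ≤ (16 * (n + 1) ^ 2) * 16 ^ n := by
          refine Nat.mul_le_mul_right _ ?_; nlinarith
      _ = _ := by ring

lemma choose_half_sq_le (k : ℕ) : (k.choose (k / 2)) ^ 2 * (k + 1) ≤ 4 ^ k := by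
  rcases Nat.even_or_odd' k with ⟨n, rfl | rfl⟩
  · have := centralBinom_sq_le n
    rw [Nat.centralBinom] at this
    rw [Nat.mul_div_cancel_left _ two_pos, pow_mul]
    exact this
  · have h := centralBinom_sq_le (n + 1)
    have h2 : Nat.centralBinom (n + 1) = 2 * (2 * n + 1).choose n := by
      rw [Nat.centralBinom_eq_two_mul_choose, show 2 * (n + 1) = 2 * n + 1 + 1 by ring,
        Nat.choose_succ_succ, Nat.choose_symm_half]; ring
    rw [h2] at h
    have h3 : (2 * n + 1) / 2 = n := by omega
    rw [h3]
    have h4 : (4 : ℕ) ^ (2 * n + 1) * 4 = 16 ^ (n + 1) := by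
      rw [← pow_succ, show 2 * n + 1 + 1 = 2 * (n + 1) by ring, pow_mul]; norm_num
    nlinarith [sq_nonneg ((2 * n + 1).choose n)]

lemma kap_nonneg (k : ℕ) : 0 ≤ kap k := by unfold kap; positivity

lemma kap_le_one (k : ℕ) : kap k ≤ 1 := by
  unfold kap
  rw [div_le_one (by positivity)]
  exact_mod_cast Nat.choose_le_two_pow k (k / 2)

lemma kap_sq_le (k : ℕ) : kap k ^ 2 ≤ 1 / (k + 1) := by
  unfold kap
  rw [div_pow, div_le_div_iff₀ (by positivity) (by positivity), one_mul]
  have := choose_half_sq_le k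
  have h2 : ((2 : ℝ) ^ k) ^ 2 = 4 ^ k := by rw [← pow_mul, mul_comm, pow_mul]; norm_num
  rw [h2]
  exact_mod_cast this

lemma kap_bound (ε : ℝ) (hε : 0 < ε) : ∃ K : ℕ, ∀ k : ℕ, kap k ≤ ε + 2 ^ K * (1 / 2) ^ k := by
  obtain ⟨K, hK⟩ := exists_nat_gt (1 / ε ^ 2)
  refine ⟨K, fun k => ?_⟩
  rcases le_total K k with h | h
  · have h1 := kap_sq_le k
    have h2 : kap k ≤ ε := by
      refine le_of_sq_le_sq ?_ hε.le |> fun h => h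
      refine h1.trans ?_
      have hk : (K : ℝ) ≤ k := by exact_mod_cast h
      rw [div_le_iff₀ (by positivity)]
      rw [div_lt_iff₀ (by positivity)] at hK
      nlinarith [sq_nonneg ε]
    have : (0 : ℝ) ≤ 2 ^ K * (1 / 2) ^ k := by positivity
    linarith
  · have h1 := kap_le_one k
    have h2 : (1 : ℝ) ≤ 2 ^ K * (1 / 2) ^ k := by
      rw [one_div, inv_pow, ← div_eq_mul_inv, le_div_iff₀ (by positivity), one_mul]
      exact pow_le_pow_right₀ (by norm_num) h
    linarith

/-- Averaged anticoncentration over a product space with sign-flips. -/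
lemma anticonc {ι : Type*} [Fintype ι] [DecidableEq ι] (t : ι → Finset ℕ) (fl : ι → ℕ → ℕ)
    (hfl : ∀ i, ∀ r ∈ t i, fl i r ∈ t i) (hinv : ∀ i, ∀ r ∈ t i, fl i (fl i r) = r)
    (T : Finset ι) (h : ι → ℕ → ℝ) (hodd : ∀ i ∈ T, ∀ r ∈ t i, h i (fl i r) = - h i r)
    (δ : ℝ) (hδ : 0 < δ) (hbig : ∀ i ∈ T, ∀ r, h i r ≠ 0 → δ ≤ |h i r|)
    (B : Finset (ι → ℕ)) (hB : ∀ ω ∈ B, ω ∈ Fintype.piFinset t ∧ |∑ i, h i (ω i)| < δ) :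
    (B.card : ℝ) ≤ ∑ ω ∈ Fintype.piFinset t, kap ((T.filter (fun i => h i (ω i) ≠ 0)).card) := by
  classical
  let f : Finset ι → (ι → ℕ) → (ι → ℕ) := fun A ω i => if i ∈ A then fl i (ω i) else ω i
  have hfmem : ∀ A, ∀ ω ∈ Fintype.piFinset t, f A ω ∈ Fintype.piFinset t := by
    intro A ω hω
    rw [Fintype.mem_piFinset] at *
    intro i
    by_cases hi : i ∈ A
    · simp only [f, hi, if_true]; exact hfl i _ (hω i)
    · simp only [f, hi, if_false]; exact hω i
  have hfinv : ∀ A, ∀ ω ∈ Fintype.piFinset t, f A (f A ω) = ω := by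
    intro A ω hω
    rw [Fintype.mem_piFinset] at hω
    funext i
    by_cases hi : i ∈ A
    · simp only [f, hi, if_true]; exact hinv i _ (hω i)
    · simp only [f, hi, if_false]
  have hA : ∀ A, B.card = ((Fintype.piFinset t).filter (fun ω => f A ω ∈ B)).card := by
    intro A
    refine Finset.card_bij' (fun ω _ => f A ω) (fun ω _ => f A ω) ?_ ?_ ?_ ?_
    · intro ω hω
      have := (hB ω hω).1
      rw [Finset.mem_filter]
      exact ⟨hfmem A ω this, by rw [hfinv A ω this]; exact hω⟩
    · intro ω hω; exact (Finset.mem_filter.1 hω).2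
    · intro ω hω; exact hfinv A ω (hB ω hω).1
    · intro ω hω; exact hfinv A ω (Finset.mem_filter.1 hω).1
  have h1 : (2 : ℝ) ^ T.card * B.card
      = ∑ ω ∈ Fintype.piFinset t, ((T.powerset.filter (fun A => f A ω ∈ B)).card : ℝ) := by
    have : ∑ A ∈ T.powerset, B.card = ∑ ω ∈ Fintype.piFinset t, (T.powerset.filter (fun A => f A ω ∈ B)).card := by
      rw [Finset.sum_congr rfl fun A _ => hA A]
      simp only [Finset.card_filter]
      exact Finset.sum_comm
    rw [Finset.sum_const, Finset.card_powerset, smul_eq_mul] at this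
    exact_mod_cast this
  have h2 : ∀ ω ∈ Fintype.piFinset t, ((T.powerset.filter (fun A => f A ω ∈ B)).card : ℝ)
      ≤ 2 ^ T.card * kap ((T.filter (fun i => h i (ω i) ≠ 0)).card) := by
    intro ω hω
    have hω' := Fintype.mem_piFinset.1 hω
    have h3 := lo_signed T (fun i => h i (ω i)) δ (∑ i ∈ Tᶜ, h i (ω i)) hδ
      (fun i hi => hbig i hi _) (T.powerset.filter (fun A => f A ω ∈ B)) (by
        intro A hA
        obtain ⟨hA1, hA2⟩ := Finset.mem_filter.1 hA
        rw [Finset.mem_powerset] at hA1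
        refine ⟨hA1, ?_⟩
        have h4 := (hB _ hA2).2
        have h5 : ∑ i, h i (f A ω i) = ∑ i ∈ Tᶜ, h i (ω i)
            + ∑ i ∈ T, (if i ∈ A then - h i (ω i) else h i (ω i)) := by
          rw [← Finset.sum_compl_add_sum T]
          congr 1
          · refine Finset.sum_congr rfl fun i hi => ?_
            have : i ∉ A := fun h => (Finset.mem_compl.1 hi) (hA1 h)
            simp [f, this]
          · refine Finset.sum_congr rfl fun i hi => ?_
            by_cases hiA : i ∈ A
            · simp only [f, hiA, if_true]; exact hodd i hi _ (hω' i)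
            · simp [f, hiA]
        rwa [h5] at h4)
    set s := (T.filter (fun i => h i (ω i) ≠ 0)).card with hs
    have hsT : s ≤ T.card := Finset.card_filter_le _ _
    have h6 : ((T.powerset.filter (fun A => f A ω ∈ B)).card : ℝ)
        ≤ 2 ^ (T.card - s) * (s.choose (s / 2) : ℝ) := by exact_mod_cast h3
    refine h6.trans (le_of_eq ?_)
    rw [kap, pow_sub₀ _ (by norm_num) hsT]
    field_simp
  have h3 := Finset.sum_le_sum h2
  rw [← h1, ← Finset.mul_sum] at h3
  exact le_of_mul_le_mul_left h3 (by positivity)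

lemma anticonc' {ι : Type*} [Fintype ι] [DecidableEq ι] (t : ι → Finset ℕ) (T : Finset ι)
    (h : ι → ℕ → ℝ) (hT : ∀ i ∈ T, 2 ≤ ((t i).filter (fun r => h i r ≠ 0)).card)
    (ε : ℝ) (K : ℕ) (hK : ∀ k : ℕ, kap k ≤ ε + 2 ^ K * (1 / 2) ^ k) :
    ∑ ω ∈ Fintype.piFinset t, kap ((T.filter (fun i => h i (ω i) ≠ 0)).card)
      ≤ (∏ i, ((t i).card : ℝ)) * (ε + 2 ^ K * ∏ i ∈ T, (1 - 1 / ((t i).card : ℝ))) := by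
  classical
  refine (Finset.sum_le_sum fun ω _ => hK _).trans ?_
  rw [Finset.sum_add_distrib, Finset.sum_const, Fintype.card_piFinset, nsmul_eq_mul,
    ← Finset.mul_sum, mul_add]
  push_cast
  have h1 : ∑ ω ∈ Fintype.piFinset t, (1 / 2 : ℝ) ^ ((T.filter (fun i => h i (ω i) ≠ 0)).card)
      = ∏ i, ∑ r ∈ t i, (if i ∈ T ∧ h i r ≠ 0 then (1 / 2 : ℝ) else 1) := by
    rw [Finset.prod_univ_sum]
    refine Finset.sum_congr rfl fun ω _ => ?_
    rw [← Finset.prod_const, Finset.prod_filter, ← Finset.prod_subset (Finset.subset_univ T)]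
    · refine Finset.prod_congr rfl fun i hi => ?_
      simp [hi]
    · intro i _ hi; simp [hi]
  have h2 : ∏ i, ∑ r ∈ t i, (if i ∈ T ∧ h i r ≠ 0 then (1 / 2 : ℝ) else 1)
      ≤ ∏ i, (((t i).card : ℝ) * (if i ∈ T then (1 - 1 / ((t i).card : ℝ)) else 1)) := by
    refine Finset.prod_le_prod (fun i _ => Finset.sum_nonneg fun r _ => by split_ifs <;> norm_num)
      fun i _ => ?_
    by_cases hi : i ∈ T
    · simp only [hi, true_and, if_true]
      have h3 := hT i hi
      have h4 := Finset.card_filter_le (t i) (fun r => h i r ≠ 0)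
      have h5 : (0 : ℝ) < (t i).card := by exact_mod_cast (by omega : 0 < (t i).card)
      rw [mul_sub, mul_one, mul_one_div_cancel h5.ne']
      have h6 : ∑ r ∈ t i, (if h i r ≠ 0 then (1 / 2 : ℝ) else 1)
          = (t i).card - (1 / 2) * ((t i).filter (fun r => h i r ≠ 0)).card := by
        rw [Finset.card_filter]
        push_cast
        rw [Finset.mul_sum, Finset.card_eq_sum_ones]
        push_cast
        rw [← Finset.sum_sub_distrib]
        refine Finset.sum_congr rfl fun r _ => ?_
        split_ifs <;> norm_num
      rw [h6]
      have : (2 : ℝ) ≤ ((t i).filter (fun r => h i r ≠ 0)).card := by exact_mod_cast h3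
      linarith
    · simp [hi]
  rw [h1]
  have h3 : ∏ i, (((t i).card : ℝ) * (if i ∈ T then (1 - 1 / ((t i).card : ℝ)) else 1))
      = (∏ i, ((t i).card : ℝ)) * ∏ i ∈ T, (1 - 1 / ((t i).card : ℝ)) := by
    rw [Finset.prod_mul_distrib]
    congr 1
    rw [Finset.prod_ite_mem, Finset.univ_inter]
  rw [h3] at h2
  have h4 := mul_le_mul_of_nonneg_left h2 (show (0 : ℝ) ≤ 2 ^ K by positivity)
  linarith

end PhiDiff

namespace PhiDiff

/-- minus the logarithm of the Euler factor -/
noncomputable def cc (q : ℕ) : ℝ := - Real.log (1 - 1 / (q : ℝ))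

/-- difference of the divisibility indicators of `r - l` and `r + l` -/
noncomputable def xi (l q r : ℕ) : ℝ :=
  (if (q : ℤ) ∣ (r : ℤ) - l then 1 else 0) - (if (q : ℤ) ∣ (r : ℤ) + l then 1 else 0)

lemma cc_ge (q : ℕ) (hq : 2 ≤ q) : 1 / (q : ℝ) ≤ cc q := by
  unfold cc
  have h2 : (2 : ℝ) ≤ q := by exact_mod_cast hq
  have h1 : (1 : ℝ) / q ≤ 1 / 2 := by gcongr
  have := Real.log_le_sub_one_of_pos (x := 1 - 1 / (q : ℝ)) (by linarith)
  linarith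

lemma cc_le (q : ℕ) (hq : 2 ≤ q) : cc q ≤ 2 * (1 / (q : ℝ)) := by
  unfold cc
  have h2 : (2 : ℝ) ≤ q := by exact_mod_cast hq
  have h1 : (1 : ℝ) / q ≤ 1 / 2 := by gcongr
  have h0 : (0 : ℝ) < 1 - 1 / q := by linarith
  have := Real.one_sub_inv_le_log_of_pos h0
  have h3 : (1 - 1 / (q : ℝ))⁻¹ - 1 ≤ 2 * (1 / (q : ℝ)) := by
    rw [sub_le_iff_le_add, inv_le_comm₀ h0 (by positivity), inv_le_iff_one_le_mul₀ (by positivity)]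
    have : (0 : ℝ) < 1 / q := by positivity
    nlinarith
  linarith

lemma xi_mod (l q p : ℕ) : xi l q (p % q) = xi l q p := by
  unfold xi
  have h : ∀ c : ℤ, (q : ℤ) ∣ ((p % q : ℕ) : ℤ) + c ↔ (q : ℤ) ∣ (p : ℤ) + c := by
    intro c
    have e : (p : ℤ) + c = ((p % q : ℕ) : ℤ) + c + q * ((p / q : ℕ) : ℤ) := by
      have := Nat.mod_add_div p q
      have h2 : ((p % q : ℕ) : ℤ) + q * ((p / q : ℕ) : ℤ) = p := by exact_mod_cast this
      linarith
    rw [e]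
    exact (dvd_add_left (dvd_mul_right _ _)).symm
  simp only [sub_eq_add_neg, h]

lemma xi_flip (l q r : ℕ) (hr : r ≤ q) : xi l q (q - r) = - xi l q r := by
  unfold xi
  have h1 : (q : ℤ) ∣ ((q - r : ℕ) : ℤ) - l ↔ (q : ℤ) ∣ (r : ℤ) + l := by
    rw [Nat.cast_sub hr, show (q : ℤ) - r - l = q - (r + l) by ring]
    exact dvd_sub_right (dvd_refl _)
  have h2 : (q : ℤ) ∣ ((q - r : ℕ) : ℤ) + l ↔ (q : ℤ) ∣ (r : ℤ) - l := by
    rw [Nat.cast_sub hr, show (q : ℤ) - r + l = q - (r - l) by ring]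
    exact dvd_sub_right (dvd_refl _)
  simp only [h1, h2]
  ring

lemma xi_abs (l q r : ℕ) (h : xi l q r ≠ 0) : |xi l q r| = 1 := by
  unfold xi at *
  split_ifs at * <;> simp_all

lemma xi_self (l q : ℕ) (hl : 0 < l) (hq : 2 * l < q) : xi l q l ≠ 0 := by
  unfold xi
  have : ¬ (q : ℤ) ∣ (l : ℤ) + l := by
    intro h
    have := Int.le_of_dvd (by omega) h
    omega
  simp [this]

lemma totient_prod_primes (P : Finset ℕ) (hP : ∀ q ∈ P, q.Prime) :
    Nat.totient (∏ q ∈ P, q) = ∏ q ∈ P, (q - 1) := by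
  induction P using Finset.induction_on with
  | empty => simp
  | insert a s ha ih =>
    have hs : ∀ q ∈ s, q.Prime := fun q hq => hP q (Finset.mem_insert_of_mem hq)
    rw [Finset.prod_insert ha, Finset.prod_insert ha, Nat.totient_mul, ih hs,
      Nat.totient_prime (hP a (Finset.mem_insert_self _ _))]
    refine Nat.Coprime.prod_right fun q hq => ?_
    exact (Nat.coprime_primes (hP a (Finset.mem_insert_self _ _)) (hs q hq)).2
      (fun h => ha (h ▸ hq))

lemma modEq_prod_primes (P : Finset ℕ) (hP : ∀ q ∈ P, q.Prime) (a b : ℕ)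
    (h : ∀ q ∈ P, a ≡ b [MOD q]) : a ≡ b [MOD ∏ q ∈ P, q] := by
  rw [Nat.modEq_iff_dvd]
  push_cast
  refine Finset.prod_dvd_of_coprime ?_ ?_
  · intro p hp q hq hne
    exact Nat.isCoprime_iff_coprime.2 ((Nat.coprime_primes (hP p hp) (hP q hq)).2 hne)
  · intro q hq
    exact (Nat.modEq_iff_dvd).1 (h q hq)

lemma count_main (l v y : ℕ) (hl : 0 < l) (hv : 1 ≤ v) (hvy : v ≤ y) (ε : ℝ) (K : ℕ)
    (hK : ∀ k : ℕ, kap k ≤ ε + 2 ^ K * (1 / 2) ^ k) (X : ℕ) (hX : 256 ≤ X) (A : Finset ℕ)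
    (hA : ∀ p ∈ A, p.Prime ∧ y < p ∧ p < X ∧
      |∑ q ∈ (Finset.Icc 1 y).filter Nat.Prime, cc q * xi l q p| < 1 / v) :
    (A.card : ℝ) ≤ 16 * X / Real.log X *
      (ε + 2 ^ K * ∏ q ∈ (Finset.Ioc (2 * l) v).filter Nat.Prime, (1 - 1 / ((q : ℝ) - 1)))
      + (∏ q ∈ (Finset.Icc 1 y).filter Nat.Prime, ((q : ℝ) - 1)) * (2 * Real.sqrt X) := by
  classical
  set P := (Finset.Icc 1 y).filter Nat.Prime with hPdef
  have hP : ∀ q ∈ P, q.Prime := fun q hq => (Finset.mem_filter.1 hq).2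
  have hPy : ∀ q ∈ P, q ≤ y := fun q hq => (Finset.mem_Icc.1 (Finset.mem_filter.1 hq).1).2
  have hvR : (0 : ℝ) < v := by exact_mod_cast hv
  let t : P → Finset ℕ := fun q => Finset.Ico 1 (q : ℕ)
  let fl : P → ℕ → ℕ := fun q r => (q : ℕ) - r
  let h : P → ℕ → ℝ := fun q r => cc q * xi l q r
  let T : Finset P := Finset.univ.filter (fun q => 2 * l < (q : ℕ) ∧ (q : ℕ) ≤ v)
  let w : ℕ → (P → ℕ) := fun p q => p % (q : ℕ)
  let B : Finset (P → ℕ) := A.image w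
  have hccpos : ∀ q ∈ P, 1 / (q : ℝ) ≤ cc q := fun q hq => cc_ge q (hP q hq).two_le
  have hccne : ∀ q ∈ P, cc q ≠ 0 := by
    intro q hq
    have h1 := hccpos q hq
    have : (0 : ℝ) < q := by exact_mod_cast (hP q hq).pos
    have h2 : 0 < 1 / (q : ℝ) := by positivity
    exact ne_of_gt (lt_of_lt_of_le h2 h1)
  have hcard : ∀ q : P, ((t q).card : ℝ) = ((q : ℕ) : ℝ) - 1 := by
    intro q
    have : 1 ≤ (q : ℕ) := (hP q q.2).one_le
    simp only [t, Nat.card_Ico]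
    push_cast [this]; ring
  have hB : ∀ ω ∈ B, ω ∈ Fintype.piFinset t ∧ |∑ i, h i (ω i)| < 1 / (v : ℝ) := by
    intro ω hω
    obtain ⟨p, hp, rfl⟩ := Finset.mem_image.1 hω
    obtain ⟨hpp, hyp, hpX, hlt⟩ := hA p hp
    constructor
    · rw [Fintype.mem_piFinset]
      intro q
      simp only [t, w, Finset.mem_Ico]
      have hq := hP q q.2
      refine ⟨?_, Nat.mod_lt _ hq.pos⟩
      rw [Nat.one_le_iff_ne_zero]
      intro h0
      have := (Nat.prime_dvd_prime_iff_eq hq hpp).1 (Nat.dvd_of_mod_eq_zero h0)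
      have := hPy q q.2
      omega
    · have : ∑ i : P, h i (w p i) = ∑ q ∈ P, cc q * xi l q p := by
        rw [← Finset.sum_coe_sort P (fun q => cc q * xi l q p)]
        refine Finset.sum_congr rfl fun q _ => ?_
        simp only [h, w, xi_mod]
      rw [this]; exact hlt
  have hB1 := anticonc t fl (by
      intro q r hr
      simp only [t, fl, Finset.mem_Ico] at *
      omega) (by
      intro q r hr
      simp only [t, fl, Finset.mem_Ico] at *
      omega) T h (by
      intro q _ r hr
      simp only [t, Finset.mem_Ico] at hr
      simp only [h, fl]
      rw [xi_flip _ _ _ hr.2.le]; ring) (1 / (v : ℝ)) (by positivity) (by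
      intro q hq r hne
      simp only [T, Finset.mem_filter] at hq
      simp only [h] at *
      have hx := right_ne_zero_of_mul hne
      have hq0 : (0 : ℝ) < (q : ℕ) := by exact_mod_cast (hP q q.2).pos
      rw [abs_mul, xi_abs _ _ _ hx, mul_one]
      refine le_trans ?_ (le_abs_self _)
      refine le_trans ?_ (hccpos q q.2)
      have : ((q : ℕ) : ℝ) ≤ v := by exact_mod_cast hq.2.2
      gcongr) B hB
  have hB2 := anticonc' t T h (by
      intro q hq
      simp only [T, Finset.mem_filter] at hq
      have hq2 := hq.2.1
      have hsub : ({l, (q : ℕ) - l} : Finset ℕ) ⊆ (t q).filter (fun r => h q r ≠ 0) := by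
        intro r hr
        simp only [Finset.mem_insert, Finset.mem_singleton] at hr
        simp only [Finset.mem_filter, t, h, Finset.mem_Ico]
        rcases hr with rfl | rfl
        · exact ⟨by omega, mul_ne_zero (hccne q q.2) (xi_self _ _ hl hq2)⟩
        · refine ⟨by omega, mul_ne_zero (hccne q q.2) ?_⟩
          rw [xi_flip _ _ _ (by omega)]
          exact neg_ne_zero.2 (xi_self _ _ hl hq2)
      refine le_trans ?_ (Finset.card_le_card hsub)
      rw [Finset.card_pair (by omega)]) ε K hK
  have hprod : ∏ i, ((t i).card : ℝ) = ∏ q ∈ P, ((q : ℝ) - 1) := by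
    rw [← Finset.prod_coe_sort P (fun q => (q : ℝ) - 1)]
    exact Finset.prod_congr rfl fun q _ => hcard q
  have hTprod : ∏ i ∈ T, (1 - 1 / ((t i).card : ℝ)) =
      ∏ q ∈ (Finset.Ioc (2 * l) v).filter Nat.Prime, (1 - 1 / ((q : ℝ) - 1)) := by
    refine Finset.prod_bij (fun q _ => (q : ℕ)) ?_ ?_ ?_ ?_
    · intro q hq
      simp only [T, Finset.mem_filter] at hq
      simp only [Finset.mem_filter, Finset.mem_Ioc]
      exact ⟨hq.2, hP q q.2⟩
    · intro a _ b _ hab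
      exact Subtype.ext hab
    · intro q hq
      simp only [Finset.mem_filter, Finset.mem_Ioc] at hq
      have : q ∈ P := by
        simp only [hPdef, Finset.mem_filter, Finset.mem_Icc]
        exact ⟨⟨hq.2.one_le, by omega⟩, hq.2⟩
      exact ⟨⟨q, this⟩, by simp only [T, Finset.mem_filter]; exact ⟨Finset.mem_univ _, hq.1⟩, rfl⟩
    · intro q _
      rw [hcard q]
  rw [hprod, hTprod] at hB2
  have hB3 := hB1.trans hB2
  have hB4 : (B.card : ℝ) ≤ ∏ q ∈ P, ((q : ℝ) - 1) := by
    rw [← hprod, ← Nat.cast_prod, ← Fintype.card_piFinset]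
    exact_mod_cast Finset.card_le_card (fun ω hω => (hB ω hω).1)
  have hPpos : 0 < ∏ q ∈ P, ((q : ℝ) - 1) := by
    refine Finset.prod_pos fun q hq => ?_
    have : (2 : ℝ) ≤ q := by exact_mod_cast (hP q hq).two_le
    linarith
  have hQpos : 0 < ∏ q ∈ P, q := Finset.prod_pos fun q hq => (hP q hq).pos
  have htot : (Nat.totient (∏ q ∈ P, q) : ℝ) = ∏ q ∈ P, ((q : ℝ) - 1) := by
    rw [totient_prod_primes P hP, Nat.cast_prod]
    refine Finset.prod_congr rfl fun q hq => ?_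
    rw [Nat.cast_sub (hP q hq).one_le, Nat.cast_one]
  have hfib : ∀ b ∈ B, ((A.filter (fun p => w p = b)).card : ℝ) ≤
      16 * X / ((∏ q ∈ P, ((q : ℝ) - 1)) * Real.log X) + 2 * Real.sqrt X := by
    intro b hb
    obtain ⟨a, ha, rfl⟩ := Finset.mem_image.1 hb
    rw [← htot]
    refine brun_titchmarsh X (∏ q ∈ P, q) a hX hQpos _ ?_
    intro p hp
    rw [Finset.mem_filter] at hp
    obtain ⟨hpp, hyp, hpX, _⟩ := hA p hp.1
    refine ⟨hpp, hpX, modEq_prod_primes P hP _ _ ?_⟩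
    intro q hq
    exact congrFun hp.2 ⟨q, hq⟩
  have hlog : 0 < Real.log X := Real.log_pos (by
    have : (256 : ℝ) ≤ X := by exact_mod_cast hX
    linarith)
  have hA1 : (A.card : ℝ) ≤ B.card *
      (16 * X / ((∏ q ∈ P, ((q : ℝ) - 1)) * Real.log X) + 2 * Real.sqrt X) := by
    rw [Finset.card_eq_sum_card_image w A]
    push_cast
    refine (Finset.sum_le_sum hfib).trans ?_
    rw [Finset.sum_const, nsmul_eq_mul]
  set Φ := ∏ q ∈ P, ((q : ℝ) - 1)
  refine hA1.trans ?_
  rw [mul_add]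
  refine add_le_add ?_ ?_
  · calc (B.card : ℝ) * (16 * X / (Φ * Real.log X)) ≤ _ :=
          mul_le_mul_of_nonneg_right hB3 (by positivity)
      _ = _ := by field_simp
  · exact mul_le_mul_of_nonneg_right hB4 (by positivity)

end PhiDiff

namespace PhiDiff

lemma log_totient (n : ℕ) (hn : 0 < n) :
    Real.log (Nat.totient n) = Real.log n - ∑ q ∈ n.primeFactors, cc q := by
  have h1 : (Nat.totient n : ℝ) = n * ∏ p ∈ n.primeFactors, (1 - 1 / (p : ℝ)) := by
    have := Nat.totient_eq_mul_prod_factors n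
    have h2 : ((Nat.totient n : ℚ) : ℝ) =
        ((n * ∏ p ∈ n.primeFactors, (1 - (p : ℚ)⁻¹) : ℚ) : ℝ) := by rw [this]
    push_cast at h2
    simpa [one_div] using h2
  have hf : ∀ p ∈ n.primeFactors, 1 - 1 / (p : ℝ) ≠ 0 := by
    intro p hp
    have h2 : (2 : ℝ) ≤ p := by exact_mod_cast (Nat.prime_of_mem_primeFactors hp).two_le
    have h1 : (1 : ℝ) / p ≤ 1 / 2 := by gcongr
    linarith
  rw [h1, Real.log_mul (by positivity) (Finset.prod_ne_zero_iff.2 hf), Real.log_prod hf]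
  simp [cc, Finset.sum_neg_distrib]

lemma hsum_split (n y N : ℕ) (hn : 0 < n) (hnN : n ≤ N) :
    ∑ q ∈ n.primeFactors, cc q =
      ∑ q ∈ (Finset.Icc 1 y).filter Nat.Prime, (if q ∣ n then cc q else 0) +
      ∑ q ∈ (Finset.Ioc y N).filter Nat.Prime, (if q ∣ n then cc q else 0) := by
  rw [← Finset.sum_filter, ← Finset.sum_filter, ← Finset.sum_union]
  · refine Finset.sum_congr ?_ fun _ _ => rfl
    ext q
    simp only [Nat.mem_primeFactors, Finset.mem_union, Finset.mem_filter, Finset.mem_Icc,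
      Finset.mem_Ioc]
    constructor
    · rintro ⟨h1, h2, h3⟩
      have := Nat.le_of_dvd hn h2
      have := h1.one_le
      rcases le_or_gt q y with h | h
      · exact Or.inl ⟨⟨⟨this, h⟩, h1⟩, h2⟩
      · exact Or.inr ⟨⟨⟨h, by omega⟩, h1⟩, h2⟩
    · rintro (⟨⟨_, h1⟩, h2⟩ | ⟨⟨_, h1⟩, h2⟩) <;> exact ⟨h1, h2, hn.ne'⟩
  · rw [Finset.disjoint_left]
    intro q h1 h2
    simp only [Finset.mem_filter, Finset.mem_Icc, Finset.mem_Ioc] at h1 h2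
    omega

/-- the contribution of the primes exceeding `y` -/
noncomputable def tail (y N n : ℕ) : ℝ :=
  ∑ q ∈ (Finset.Ioc y N).filter Nat.Prime, (if q ∣ n then cc q else 0)

lemma key_ineq (l y N p : ℕ) (hl : l < p) (hN : p + l ≤ N)
    (h : Nat.totient (p - l) = Nat.totient (p + l)) :
    |∑ q ∈ (Finset.Icc 1 y).filter Nat.Prime, cc q * xi l q p| ≤
      2 * l / ((p : ℝ) - l) + |tail y N (p - l)| + |tail y N (p + l)| := by
  have h1 := log_totient (p - l) (by omega)
  have h2 := log_totient (p + l) (by omega)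
  rw [hsum_split (p - l) y N (by omega) (by omega)] at h1
  rw [hsum_split (p + l) y N (by omega) (by omega)] at h2
  rw [h, h2] at h1
  have e : ∑ q ∈ (Finset.Icc 1 y).filter Nat.Prime, cc q * xi l q p =
      ∑ q ∈ (Finset.Icc 1 y).filter Nat.Prime, (if q ∣ p - l then cc q else 0) -
      ∑ q ∈ (Finset.Icc 1 y).filter Nat.Prime, (if q ∣ p + l then cc q else 0) := by
    rw [← Finset.sum_sub_distrib]
    refine Finset.sum_congr rfl fun q _ => ?_
    unfold xi
    have d1 : (q : ℤ) ∣ (p : ℤ) - l ↔ q ∣ p - l := by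
      rw [← Nat.cast_sub hl.le, Int.natCast_dvd_natCast]
    have d2 : (q : ℤ) ∣ (p : ℤ) + l ↔ q ∣ p + l := by
      rw [← Nat.cast_add, Int.natCast_dvd_natCast]
    simp only [d1, d2]
    split_ifs <;> ring
  have hlp : (l : ℝ) < p := by exact_mod_cast hl
  have hpos : 0 < (p : ℝ) - l := by linarith
  have hl0 : (0 : ℝ) ≤ l := Nat.cast_nonneg l
  have hpos2 : 0 < (p : ℝ) + l := by linarith
  have hlog : |Real.log ((p - l : ℕ) : ℝ) - Real.log ((p + l : ℕ) : ℝ)| ≤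
      2 * l / ((p : ℝ) - l) := by
    rw [abs_sub_comm, Nat.cast_sub hl.le, Nat.cast_add, ← Real.log_div hpos2.ne' hpos.ne',
      abs_of_nonneg]
    · refine (Real.log_le_sub_one_of_pos (div_pos hpos2 hpos)).trans (le_of_eq ?_)
      field_simp; ring
    · refine Real.log_nonneg ?_
      rw [le_div_iff₀ hpos]; linarith
  have e2 : ∑ q ∈ (Finset.Icc 1 y).filter Nat.Prime, cc q * xi l q p =
      (Real.log ((p - l : ℕ) : ℝ) - Real.log ((p + l : ℕ) : ℝ)) - tail y N (p - l)
        + tail y N (p + l) := by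
    rw [e]; unfold tail; linarith
  rw [e2]
  refine (abs_add_le _ _).trans ?_
  have := abs_sub (Real.log ((p - l : ℕ) : ℝ) - Real.log ((p + l : ℕ) : ℝ)) (tail y N (p - l))
  linarith

lemma tail_nonneg (y N n : ℕ) : 0 ≤ tail y N n := by
  unfold tail
  refine Finset.sum_nonneg fun q hq => ?_
  have h2 := (Finset.mem_filter.1 hq).2.two_le
  have := cc_ge q h2
  have : (0 : ℝ) ≤ 1 / q := by positivity
  split_ifs <;> linarith

lemma tail_markov (X l y : ℕ) (hX : 256 ≤ X) (hl : l ≤ X) (hy : 1 ≤ y) (S : Finset ℕ)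
    (hS : ∀ p ∈ S, p.Prime ∧ p < X) (f a : ℕ → ℕ)
    (hf : ∀ p ∈ S, ∀ q, q.Prime → q ∣ f p → p ≡ a q [MOD q]) (η : ℝ) (hη : 0 < η) :
    ((S.filter (fun p => η ≤ tail y (X + l) (f p))).card : ℝ) ≤
      2 / η * (32 * X / (y * Real.log X) + 10 * (X : ℝ) ^ (3 / 4 : ℝ)) := by
  have hb := tail_bound X l y hX hl hy (fun q => S.filter (fun p => q.Prime ∧ q ∣ f p)) a (by
    intro q p hp
    obtain ⟨h1, h2, h3⟩ := Finset.mem_filter.1 hp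
    exact ⟨(hS p h1).1, (hS p h1).2, hf p h1 q h2 h3⟩)
  have h1 : ((S.filter (fun p => η ≤ tail y (X + l) (f p))).card : ℝ) * η ≤
      ∑ p ∈ S, tail y (X + l) (f p) := by
    rw [← nsmul_eq_mul]
    refine (Finset.card_nsmul_le_sum _ (fun p => tail y (X + l) (f p)) η ?_).trans ?_
    · intro p hp; exact (Finset.mem_filter.1 hp).2
    · exact Finset.sum_le_sum_of_subset_of_nonneg (Finset.filter_subset _ _)
        fun p _ _ => tail_nonneg _ _ _
  have h2 : ∑ p ∈ S, tail y (X + l) (f p) ≤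
      2 * ∑ q ∈ (Finset.Ioc y (X + l)).filter Nat.Prime,
        (1 / (q : ℝ)) * ((S.filter (fun p => q.Prime ∧ q ∣ f p)).card : ℝ) := by
    unfold tail
    rw [Finset.sum_comm, Finset.mul_sum]
    refine Finset.sum_le_sum fun q hq => ?_
    have hqp := (Finset.mem_filter.1 hq).2
    rw [← Finset.sum_filter, Finset.sum_const, nsmul_eq_mul]
    have := cc_le q hqp.two_le
    simp only [hqp, true_and]
    calc _ ≤ ((S.filter (fun p => q ∣ f p)).card : ℝ) * (2 * (1 / (q : ℝ))) := by gcongr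
      _ = _ := by ring
  rw [div_mul_eq_mul_div, le_div_iff₀ hη]
  linarith

lemma total (l v y M X : ℕ) (hl : 0 < l) (hv : 1 ≤ v) (hvy : v ≤ y) (hyM : y ≤ M) (hlM : l < M)
    (hM : 2 * l / ((M : ℝ) - l) ≤ 1 / (3 * v)) (ε : ℝ) (K : ℕ)
    (hK : ∀ k : ℕ, kap k ≤ ε + 2 ^ K * (1 / 2) ^ k) (hX : 256 ≤ X) (hlX : l ≤ X) (S : Finset ℕ)
    (hS : ∀ p ∈ S, p.Prime ∧ p < X ∧ l < p ∧ Nat.totient (p - l) = Nat.totient (p + l)) :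
    (S.card : ℝ) ≤ (M + 1) +
      12 * v * (32 * X / (y * Real.log X) + 10 * (X : ℝ) ^ (3 / 4 : ℝ)) +
      (16 * X / Real.log X *
      (ε + 2 ^ K * ∏ q ∈ (Finset.Ioc (2 * l) v).filter Nat.Prime, (1 - 1 / ((q : ℝ) - 1)))
      + (∏ q ∈ (Finset.Icc 1 y).filter Nat.Prime, ((q : ℝ) - 1)) * (2 * Real.sqrt X)) := by
  classical
  have hvR : (0 : ℝ) < v := by exact_mod_cast hv
  set η : ℝ := 1 / (3 * v) with hη
  have hη0 : 0 < η := by positivity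
  set S1 := S.filter (fun p => η ≤ tail y (X + l) (p - l))
  set S2 := S.filter (fun p => η ≤ tail y (X + l) (p + l))
  set A := S.filter (fun p => M < p ∧ tail y (X + l) (p - l) < η ∧ tail y (X + l) (p + l) < η)
  have hcov : S ⊆ Finset.range (M + 1) ∪ S1 ∪ S2 ∪ A := by
    intro p hp
    simp only [Finset.mem_union, Finset.mem_range, S1, S2, A, Finset.mem_filter, hp, true_and]
    by_cases h1 : p < M + 1
    · tauto
    by_cases h2 : η ≤ tail y (X + l) (p - l)
    · tauto
    by_cases h3 : η ≤ tail y (X + l) (p + l)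
    · tauto
    right
    exact ⟨by omega, not_le.1 h2, not_le.1 h3⟩
  have hcard : S.card ≤ (M + 1) + S1.card + S2.card + A.card := by
    refine (Finset.card_le_card hcov).trans ?_
    have a1 := Finset.card_union_le (Finset.range (M + 1) ∪ S1 ∪ S2) A
    have a2 := Finset.card_union_le (Finset.range (M + 1) ∪ S1) S2
    have a3 := Finset.card_union_le (Finset.range (M + 1)) S1
    rw [Finset.card_range] at a3
    omega
  have hcardR : (S.card : ℝ) ≤ (M + 1) + S1.card + S2.card + A.card := by exact_mod_cast hcard
  have b1 : (S1.card : ℝ) ≤ _ := tail_markov X l y hX hlX (by omega) S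
    (fun p hp => ⟨(hS p hp).1, (hS p hp).2.1⟩) (fun p => p - l) (fun _ => l) (by
      intro p hp q _ hd
      exact ((Nat.modEq_iff_dvd' (hS p hp).2.2.1.le).2 hd).symm) η hη0
  have b2 : (S2.card : ℝ) ≤ _ := tail_markov X l y hX hlX (by omega) S
    (fun p hp => ⟨(hS p hp).1, (hS p hp).2.1⟩) (fun p => p + l) (fun q => q * l - l) (by
      intro p hp q hq hd
      refine Nat.ModEq.add_right_cancel' l ?_
      have h1 : l ≤ q * l := Nat.le_mul_of_pos_left l hq.pos
      rw [Nat.sub_add_cancel h1]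
      refine ((Nat.modEq_zero_iff_dvd).2 hd).trans ?_
      exact ((Nat.modEq_zero_iff_dvd).2 (dvd_mul_right _ _)).symm) η hη0
  have b3 := count_main l v y hl hv hvy ε K hK X hX A (by
    intro p hp
    obtain ⟨hp, hMp, ht1, ht2⟩ := Finset.mem_filter.1 hp
    obtain ⟨hpp, hpX, hlp, heq⟩ := hS p hp
    refine ⟨hpp, by omega, hpX, ?_⟩
    refine (key_ineq l y (X + l) p hlp (by omega) heq).trans_lt ?_
    rw [abs_of_nonneg (tail_nonneg _ _ _), abs_of_nonneg (tail_nonneg _ _ _)]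
    have hMR : (M : ℝ) ≤ p := by exact_mod_cast hMp.le
    have hlMR : (l : ℝ) < M := by exact_mod_cast hlM
    have h3 : 2 * (l : ℝ) / ((p : ℝ) - l) ≤ 2 * l / ((M : ℝ) - l) := by
      have : 0 < (M : ℝ) - l := by linarith
      gcongr
    have : 1 / (v : ℝ) = 3 * η := by rw [hη]; field_simp
    linarith)
  have e : 2 / η = 6 * v := by rw [hη]; field_simp; norm_num
  rw [e] at b1 b2
  linarith

end PhiDiff

namespace PhiDiff

lemma prod_small (l : ℕ) (hl : 0 < l) (ε : ℝ) (hε : 0 < ε) :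
    ∃ v : ℕ, 1 ≤ v ∧
      ∏ q ∈ (Finset.Ioc (2 * l) v).filter Nat.Prime, (1 - 1 / ((q : ℝ) - 1)) ≤ ε := by
  set f : ℕ → ℝ := Set.indicator {p : ℕ | p.Prime} (fun n : ℕ => (1 : ℝ) / n) with hf
  have hf0 : ∀ n, 0 ≤ f n := fun n => Set.indicator_nonneg (fun _ _ => by positivity) n
  have ht := (not_summable_iff_tendsto_nat_atTop_of_nonneg hf0).1 not_summable_one_div_on_primes
  obtain ⟨v, hv1, hv2⟩ := ((ht.comp (tendsto_add_atTop_nat 1)).eventually_ge_atTop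
    (∑ i ∈ Finset.range (2 * l + 1), f i - Real.log ε)).and (eventually_ge_atTop (2 * l + 1))
    |>.exists
  refine ⟨v, by omega, ?_⟩
  simp only [Function.comp] at hv1
  have e1 : ∑ q ∈ (Finset.Ioc (2 * l) v).filter Nat.Prime, 1 / (q : ℝ) =
      ∑ i ∈ Finset.range (v + 1), f i - ∑ i ∈ Finset.range (2 * l + 1), f i := by
    rw [← Finset.sum_Ico_eq_sub _ (by omega), Finset.sum_filter]
    have : Finset.Ico (2 * l + 1) (v + 1) = Finset.Ioc (2 * l) v := by
      ext q; simp only [Finset.mem_Ico, Finset.mem_Ioc]; omega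
    rw [this]
    refine Finset.sum_congr rfl fun q _ => ?_
    simp [hf, Set.indicator_apply]
  have e2 : ∏ q ∈ (Finset.Ioc (2 * l) v).filter Nat.Prime, (1 - 1 / ((q : ℝ) - 1)) ≤
      ∏ q ∈ (Finset.Ioc (2 * l) v).filter Nat.Prime, Real.exp (- (1 / (q : ℝ))) := by
    refine Finset.prod_le_prod ?_ ?_
    · intro q hq
      simp only [Finset.mem_filter, Finset.mem_Ioc] at hq
      have : (3 : ℝ) ≤ q := by exact_mod_cast (by omega : 3 ≤ q)
      rw [sub_nonneg, div_le_one (by linarith)]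
      linarith
    · intro q hq
      simp only [Finset.mem_filter, Finset.mem_Ioc] at hq
      have h3 : (3 : ℝ) ≤ q := by exact_mod_cast (by omega : 3 ≤ q)
      have h4 := Real.add_one_le_exp (- (1 / (q : ℝ)))
      have h5 : 1 / (q : ℝ) ≤ 1 / ((q : ℝ) - 1) :=
        one_div_le_one_div_of_le (by linarith) (by linarith)
      linarith
  refine e2.trans ?_
  rw [← Real.exp_sum, Finset.sum_neg_distrib, e1]
  rw [← Real.le_log_iff_exp_le hε]
  linarith

lemma pi_lower : ∀ᶠ x : ℕ in atTop,
    ((x + 1 : ℕ) : ℝ) / Real.log ((x + 1 : ℕ) : ℝ) ≤ 4 * (Nat.primeCounting x : ℝ) := by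
  have h1 := (Real.isLittleO_log_id_atTop.bound (show (0 : ℝ) < 1 / 5 by norm_num))
  have h2 : Tendsto (fun x : ℕ => ((x + 1 : ℕ) : ℝ)) atTop atTop :=
    tendsto_natCast_atTop_atTop.comp (tendsto_add_atTop_nat 1)
  filter_upwards [h2.eventually h1, eventually_ge_atTop 100] with x hx hx2
  have hxR : (100 : ℝ) ≤ x := by exact_mod_cast hx2
  have h3 := Chebyshev.pi_ge x
  have hl0 : 0 < Real.log x := Real.log_pos (by linarith)
  have hl1 : Real.log x ≤ Real.log ((x + 1 : ℕ) : ℝ) := by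
    refine Real.log_le_log (by linarith) ?_
    push_cast; linarith
  have hl2 : Real.log ((x + 1 : ℕ) : ℝ) ≤ 1 / 5 * (x + 1) := by
    have := (le_abs_self _).trans hx
    simpa [abs_of_nonneg (show (0 : ℝ) ≤ x + 1 by positivity)] using this
  have hlog2 := Real.log_two_gt_d9
  push_cast at hl1 hl2 ⊢
  have h4 : ((x : ℝ) + 1) / 4 / Real.log (x + 1) ≤
      (x * Real.log 2 - Real.log (x + 1)) / Real.log x := by
    refine div_le_div₀ ?_ ?_ hl0 hl1
    · nlinarith
    · nlinarith
  have h5 := h4.trans h3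
  have h6 : ((x : ℝ) + 1) / 4 / Real.log (x + 1) = ((x : ℝ) + 1) / Real.log (x + 1) / 4 := by ring
  linarith

lemma small_err (C ε : ℝ) (hC : 0 ≤ C) (hε : 0 < ε) : ∀ᶠ X : ℕ in atTop,
    C * (X : ℝ) ^ (3 / 4 : ℝ) ≤ ε * (X / Real.log X) := by
  have h1 := (isLittleO_log_rpow_atTop (show (0 : ℝ) < 1 / 4 by norm_num)).bound
    (show (0 : ℝ) < ε / (C + 1) by positivity)
  filter_upwards [tendsto_natCast_atTop_atTop.eventually h1, eventually_ge_atTop 2] with X hX hX2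
  have hXR : (2 : ℝ) ≤ X := by exact_mod_cast hX2
  have hl0 : 0 < Real.log X := Real.log_pos (by linarith)
  rw [Real.norm_of_nonneg hl0.le, Real.norm_of_nonneg (by positivity)] at hX
  rw [← mul_div_assoc, le_div_iff₀ hl0]
  have e : (X : ℝ) = (X : ℝ) ^ (3 / 4 : ℝ) * (X : ℝ) ^ (1 / 4 : ℝ) := by
    rw [← Real.rpow_add (by linarith)]; norm_num
  have h2 : C * Real.log X ≤ ε * (X : ℝ) ^ (1 / 4 : ℝ) := by
    have h3 : (C + 1) * Real.log X ≤ ε * (X : ℝ) ^ (1 / 4 : ℝ) := by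
      calc (C + 1) * Real.log X ≤ (C + 1) * (ε / (C + 1) * (X : ℝ) ^ (1 / 4 : ℝ)) := by gcongr
        _ = _ := by field_simp
    linarith
  have h4 : 0 ≤ (X : ℝ) ^ (3 / 4 : ℝ) := by positivity
  calc C * (X : ℝ) ^ (3 / 4 : ℝ) * Real.log X
      = (X : ℝ) ^ (3 / 4 : ℝ) * (C * Real.log X) := by ring
    _ ≤ (X : ℝ) ^ (3 / 4 : ℝ) * (ε * (X : ℝ) ^ (1 / 4 : ℝ)) := by gcongr
    _ = ε * ((X : ℝ) ^ (3 / 4 : ℝ) * (X : ℝ) ^ (1 / 4 : ℝ)) := by ring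
    _ = ε * X := by rw [← e]

lemma count_eventually (l : ℕ) (hl : 0 < l) (ε : ℝ) (hε : 0 < ε) : ∀ᶠ X : ℕ in atTop,
    ∀ S : Finset ℕ,
    (∀ p ∈ S, p.Prime ∧ p < X ∧ l < p ∧ Nat.totient (p - l) = Nat.totient (p + l)) →
    (S.card : ℝ) ≤ 34 * ε * (X / Real.log X) := by
  obtain ⟨K, hK⟩ := kap_bound ε hε
  obtain ⟨v, hv, hprod⟩ := prod_small l hl (ε / 2 ^ K) (by positivity)
  have hvR : (0 : ℝ) < v := by exact_mod_cast hv
  obtain ⟨y0, hy0⟩ := exists_nat_gt (384 * v / ε)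
  set y := max y0 v with hy
  have hvy : v ≤ y := le_max_right _ _
  have hyR : 384 * v / ε < (y : ℝ) := hy0.trans_le (by exact_mod_cast le_max_left _ _)
  have hypos : (0 : ℝ) < y := lt_of_le_of_lt (by positivity) hyR
  set M := y + l + 6 * l * v with hMdef
  have hMl : 2 * l / ((M : ℝ) - l) ≤ 1 / (3 * v) := by
    have e : (M : ℝ) - l = y + 6 * l * v := by rw [hMdef]; push_cast; ring
    have hlR : (0 : ℝ) < l := by exact_mod_cast hl
    rw [e, div_le_div_iff₀ (by positivity) (by positivity)]
    nlinarith
  set Φ := ∏ q ∈ (Finset.Icc 1 y).filter Nat.Prime, ((q : ℝ) - 1) with hΦ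
  have hΦ0 : 0 ≤ Φ := by
    refine Finset.prod_nonneg fun q hq => ?_
    have : (1 : ℝ) ≤ q := by exact_mod_cast (Finset.mem_filter.1 hq).2.one_le
    linarith
  have herr := small_err ((M + 1) + 120 * v + 2 * Φ) ε (by positivity) hε
  filter_upwards [herr, eventually_ge_atTop 256, eventually_ge_atTop l] with X hX h256 hlX
  intro S hS
  have ht := total l v y M X hl hv hvy (by omega) (by omega) hMl ε K hK h256 hlX S hS
  have hXR : (256 : ℝ) ≤ X := by exact_mod_cast h256
  have hl0 : 0 < Real.log X := Real.log_pos (by linarith)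
  set L := (X : ℝ) / Real.log X with hL
  have hL0 : 0 ≤ L := by positivity
  have e1 : 32 * (X : ℝ) / (y * Real.log X) = 32 / y * L := by rw [hL]; field_simp
  have e2 : 16 * (X : ℝ) / Real.log X = 16 * L := by rw [hL]; ring
  rw [e1, e2] at ht
  have p1 : (1 : ℝ) ≤ (X : ℝ) ^ (3 / 4 : ℝ) := Real.one_le_rpow (by linarith) (by norm_num)
  have p2 : Real.sqrt X ≤ (X : ℝ) ^ (3 / 4 : ℝ) := by
    rw [Real.sqrt_eq_rpow]
    exact Real.rpow_le_rpow_of_exponent_le (by linarith) (by norm_num)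
  have q1 : 2 ^ K * ∏ q ∈ (Finset.Ioc (2 * l) v).filter Nat.Prime, (1 - 1 / ((q : ℝ) - 1)) ≤ ε := by
    rw [le_div_iff₀ (by positivity)] at hprod
    linarith
  have q2 : 12 * v * (32 / y) ≤ ε := by
    rw [div_lt_iff₀ hε] at hyR
    rw [← mul_div_assoc, div_le_iff₀ hypos]
    linarith
  have r1 : 12 * v * (32 / y) * L ≤ ε * L := by gcongr
  have r2 : 16 * L * (ε + 2 ^ K * ∏ q ∈ (Finset.Ioc (2 * l) v).filter Nat.Prime,
      (1 - 1 / ((q : ℝ) - 1))) ≤ 16 * L * (ε + ε) := by gcongr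
  have r3 : Φ * (2 * Real.sqrt X) ≤ 2 * Φ * (X : ℝ) ^ (3 / 4 : ℝ) := by
    calc Φ * (2 * Real.sqrt X) = 2 * Φ * Real.sqrt X := by ring
      _ ≤ _ := by gcongr
  have r4 : ((M : ℝ) + 1) ≤ (M + 1) * (X : ℝ) ^ (3 / 4 : ℝ) :=
    le_mul_of_one_le_right (by positivity) p1
  nlinarith

end PhiDiff

theorem phi_diff_equal_density (ℓ : ℕ) (hℓ : 0 < ℓ) :
    Tendsto (fun x : ℕ =>
      ({p : ℕ | p.Prime ∧ p ≤ x ∧ ℓ < p ∧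
          Nat.totient (p - ℓ) = Nat.totient (p + ℓ)}.ncard : ℝ) /
        (Nat.primeCounting x : ℝ)) atTop (𝓝 0) := by
  rw [Metric.tendsto_atTop']
  intro ε hε
  have h1 := (tendsto_add_atTop_nat 1).eventually
    (PhiDiff.count_eventually ℓ hℓ (ε / 200) (by positivity))
  have h := (h1.and PhiDiff.pi_lower).and (eventually_ge_atTop 2)
  obtain ⟨N, hN⟩ := eventually_atTop.1 h
  refine ⟨N, fun x hx => ?_⟩
  obtain ⟨⟨hc, hp⟩, hx2⟩ := hN x hx.le
  have hpi : 0 < (Nat.primeCounting x : ℝ) := by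
    have hxR : (2 : ℝ) ≤ x := by exact_mod_cast hx2
    have : 0 < ((x + 1 : ℕ) : ℝ) / Real.log ((x + 1 : ℕ) : ℝ) := by
      have : 0 < Real.log ((x + 1 : ℕ) : ℝ) := Real.log_pos (by push_cast; linarith)
      positivity
    linarith
  have hfin : {p : ℕ | p.Prime ∧ p ≤ x ∧ ℓ < p ∧
      Nat.totient (p - ℓ) = Nat.totient (p + ℓ)}.Finite :=
    (Set.finite_Iic x).subset fun p hp => hp.2.1
  have hS := hc hfin.toFinset (by
    intro p hp
    rw [Set.Finite.mem_toFinset] at hp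
    exact ⟨hp.1, Nat.lt_succ_of_le hp.2.1, hp.2.2⟩)
  rw [← Set.ncard_eq_toFinset_card _ hfin] at hS
  rw [Real.dist_eq, sub_zero, abs_of_nonneg (by positivity), div_lt_iff₀ hpi]
  have : 34 * (ε / 200) * (((x + 1 : ℕ) : ℝ) / Real.log ((x + 1 : ℕ) : ℝ)) ≤
      34 * (ε / 200) * (4 * (Nat.primeCounting x : ℝ)) := by gcongr
  nlinarith [mul_pos hε hpi]
end

section
/- Let ℓ be a positive integer that is not of the form 4^n − 1 for any integer n ≥ 1. Then there exists a constant C > 0 such that for all sufficiently large x, #{p ≤ x : p prime, p > ℓ, φ(p−ℓ) = φ(p+ℓ)} ≤ C · x / exp((log x)^{1/3}). -/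
open Filter Topology

/-- If `φ(2b) = b` then `2b` is a power of two. -/
lemma two_pow_of_totient_half (b : ℕ) (hb : 0 < b) (h : Nat.totient (2 * b) = b) :
    ∃ i : ℕ, b = 2 ^ i := by
  obtain ⟨i, o, ho, rfl⟩ := Nat.exists_eq_two_pow_mul_odd hb.ne'
  have hc : Nat.Coprime (2 ^ (i + 1)) o := Nat.Coprime.pow_left _ (Nat.coprime_two_left.mpr ho)
  have e : 2 * (2 ^ i * o) = 2 ^ (i + 1) * o := by ring
  rw [e, Nat.totient_mul hc, Nat.totient_prime_pow_succ Nat.prime_two] at h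
  have h2 : Nat.totient o = o := by
    have : 2 ^ i * Nat.totient o = 2 ^ i * o := by simpa using h
    exact Nat.eq_of_mul_eq_mul_left (by positivity) this
  have ho1 : o = 1 := by
    by_contra hne
    have hpos : 0 < o := ho.pos
    have := Nat.totient_lt o (by omega)
    omega
  exact ⟨i, by rw [ho1, mul_one]⟩

lemma degenerate_false (ℓ a b P q : ℕ) (hℓ : 0 < ℓ)
    (h4 : ¬ ∃ n : ℕ, 1 ≤ n ∧ ℓ = 4 ^ n - 1) (ha : 0 < a)
    (hP : P.Prime) (hq : q.Prime) (hP3 : 3 < P) (hq3 : 3 < q)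
    (hp : (a * P + ℓ).Prime)
    (heq : a * P + 2 * ℓ = b * q)
    (hphi : Nat.totient a * (P - 1) = Nat.totient b * (q - 1))
    (hdeg : b * Nat.totient a = a * Nat.totient b) : False := by
  obtain ⟨P', rfl⟩ : ∃ P', P = P' + 1 := ⟨P - 1, by omega⟩
  obtain ⟨q', rfl⟩ : ∃ q', q = q' + 1 := ⟨q - 1, by omega⟩
  simp only [Nat.add_sub_cancel] at hphi
  have hb : 0 < b := by
    rcases Nat.eq_zero_or_pos b with h | h
    · subst h; nlinarith
    · exact h
  have htb : 0 < Nat.totient b := Nat.totient_pos.mpr hb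
  have hab : a * P' = b * q' := by
    apply Nat.eq_of_mul_eq_mul_left htb
    calc Nat.totient b * (a * P') = (a * Nat.totient b) * P' := by ring
      _ = b * (Nat.totient a * P') := by rw [← hdeg]; ring
      _ = Nat.totient b * (b * q') := by rw [hphi]; ring
  have hba : b = a + 2 * ℓ := by nlinarith
  have hcop : Nat.Coprime a ℓ := by
    have h1 : Nat.gcd a ℓ ∣ a * (P' + 1) + ℓ :=
      dvd_add ((Nat.gcd_dvd_left a ℓ).mul_right _) (Nat.gcd_dvd_right a ℓ)
    rcases (Nat.dvd_prime hp).mp h1 with h | h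
    · exact h
    · have := Nat.le_of_dvd hℓ (Nat.gcd_dvd_right a ℓ)
      nlinarith
  have hg : Nat.gcd a b ∣ 2 := by
    have h1 : Nat.gcd a b ∣ 2 * ℓ := by
      have := Nat.dvd_sub (Nat.gcd_dvd_right a b) (Nat.gcd_dvd_left a b)
      rwa [hba, Nat.add_sub_cancel_left, ← hba] at this
    exact (Nat.Coprime.coprime_dvd_left (Nat.gcd_dvd_left a b) hcop).dvd_of_dvd_mul_right h1
  rcases (Nat.dvd_prime Nat.prime_two).mp hg with h | h
  · have h1 : b ∣ a * Nat.totient b := ⟨_, hdeg.symm⟩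
    have h2 : b ∣ Nat.totient b := (Nat.Coprime.symm h).dvd_of_dvd_mul_left h1
    have := Nat.le_of_dvd htb h2
    have := Nat.totient_lt b (by omega)
    omega
  · obtain ⟨a', ha'⟩ : 2 ∣ a := h ▸ Nat.gcd_dvd_left a b
    obtain ⟨b', hb'⟩ : 2 ∣ b := h ▸ Nat.gcd_dvd_right a b
    have hc' : Nat.Coprime a' b' := by
      rw [ha', hb', Nat.gcd_mul_left] at h
      unfold Nat.Coprime; omega
    have e1 : b' * Nat.totient a = a' * Nat.totient b := by
      have : 2 * (b' * Nat.totient a) = 2 * (a' * Nat.totient b) := by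
        calc _ = (2 * b') * Nat.totient a := by ring
          _ = (2 * a') * Nat.totient b := by rw [← hb', ← ha', hdeg]
          _ = _ := by ring
      omega
    have h1 : b' ∣ Nat.totient b := hc'.symm.dvd_of_dvd_mul_left ⟨_, e1.symm⟩
    have hlt := Nat.totient_lt b (by omega)
    obtain ⟨t, ht⟩ := h1
    have ht1 : t = 1 := by
      have : t < 2 := by
        by_contra hc
        have : b' * 2 ≤ b' * t := Nat.mul_le_mul_left _ (by omega)
        omega
      have : t ≠ 0 := by rintro rfl; omega
      omega
    rw [ht1, mul_one] at ht
    have hta : Nat.totient a = a' := by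
      rw [ht] at e1
      apply Nat.eq_of_mul_eq_mul_left (show 0 < b' by omega)
      rw [e1, mul_comm]
    obtain ⟨i, hi⟩ := two_pow_of_totient_half a' (by omega) (ha' ▸ hta)
    obtain ⟨j, hj⟩ := two_pow_of_totient_half b' (by omega) (hb' ▸ ht)
    have hl : ℓ + a' = b' := by omega
    have hlodd : Odd ℓ := by
      rw [ha'] at hcop
      exact Nat.coprime_two_left.mp (Nat.Coprime.coprime_dvd_left (Dvd.intro _ rfl) hcop)
    have hi0 : i = 0 := by
      by_contra hne
      have hij : i < j := by
        by_contra hc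
        have : 2 ^ j ≤ 2 ^ i := Nat.pow_le_pow_right (by norm_num) (by omega)
        omega
      have d1 : 2 ∣ a' := hi ▸ dvd_pow_self 2 hne
      have d2 : 2 ∣ b' := hj ▸ dvd_pow_self 2 (by omega)
      obtain ⟨s, hs⟩ := hlodd
      omega
    subst hi0
    simp only [pow_zero] at hi
    subst hi
    rcases Nat.even_or_odd' j with ⟨s, hs | hs⟩
    · apply h4
      refine ⟨s, ?_, ?_⟩
      · rcases Nat.eq_zero_or_pos s with h0 | h0
        · subst h0; subst hs; simp at hj; omega
        · exact h0
      · have : (4:ℕ) ^ s = 2 ^ j := by rw [hs, pow_mul]; norm_num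
        omega
    · have hmod : b' % 3 = 2 := by
        rw [hj, hs, pow_succ, pow_mul, Nat.mul_mod, Nat.pow_mod]; norm_num
      have hPq : P' = b' * q' := by
        have : 2 * P' = 2 * (b' * q') := by rw [ha', hb'] at hab; linarith
        omega
      have nd : ∀ p : ℕ, p.Prime → 3 < p → p % 3 ≠ 0 := by
        intro p hp h3 h0
        rcases (Nat.dvd_prime hp).mp (Nat.dvd_of_mod_eq_zero h0) with h | h <;> omega
      have n1 := nd _ hP hP3
      have n2 := nd _ hq hq3
      have n3 := nd _ hp (by nlinarith)
      have e3 : P' % 3 = (2 * (q' % 3)) % 3 := by rw [hPq, Nat.mul_mod, hmod]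
      rw [ha'] at n3
      have hq03 : q' % 3 = 0 ∨ q' % 3 = 1 ∨ q' % 3 = 2 := by omega
      clear hphi hdeg heq hab e1 hPq hp hP hq
      rcases hq03 with h0 | h0 | h0 <;> rw [h0] at e3 <;> norm_num at e3 <;> omega

/-- prime divisor of a totient -/
lemma prime_dvd_totient (r m : ℕ) (hm : m ≠ 0) (hr : r.Prime) (h : r ∣ Nat.totient m) :
    r ^ 2 ∣ m ∨ ∃ q : ℕ, q.Prime ∧ q ∣ m ∧ r ∣ q - 1 := by
  rw [Nat.totient_eq_prod_factorization hm, Finsupp.prod] at h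
  obtain ⟨q, hq, hd⟩ := (Prime.dvd_finsetProd_iff hr.prime _).mp h
  have hqp : q.Prime := Nat.prime_of_mem_primeFactors hq
  have hqd : q ∣ m := Nat.dvd_of_mem_primeFactors hq
  rcases hr.dvd_mul.mp hd with h1 | h1
  · left
    have hrq : r = q := (Nat.prime_dvd_prime_iff_eq hr hqp).mp (hr.dvd_of_dvd_pow h1)
    subst hrq
    have : 2 ≤ m.factorization r := by
      by_contra hc
      have : m.factorization r - 1 = 0 := by omega
      rw [this, pow_zero] at h1
      exact hr.one_lt.ne' (Nat.dvd_one.mp h1)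
    exact (hr.pow_dvd_iff_le_factorization hm).mpr this
  · right
    exact ⟨q, hqp, hqd, h1⟩

lemma totient_split (m q : ℕ) (hq : q.Prime) (hd : q ∣ m) (hs : ¬ q ^ 2 ∣ m) :
    ∃ b, m = b * q ∧ Nat.totient m = Nat.totient b * (q - 1) := by
  obtain ⟨b, rfl⟩ := hd
  refine ⟨b, mul_comm _ _, ?_⟩
  have : Nat.Coprime q b := by
    rw [hq.coprime_iff_not_dvd]
    intro hb
    exact hs (by rw [pow_two]; exact Nat.mul_dvd_mul_left q hb)
  rw [Nat.totient_mul this, Nat.totient_prime hq, mul_comm]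

lemma cover (ℓ X N₁ N₂ R n : ℕ) (hℓ : 0 < ℓ)
    (h4 : ¬ ∃ n : ℕ, 1 ≤ n ∧ ℓ = 4 ^ n - 1)
    (hN1 : 2 * ℓ < N₁) (hN12 : N₂ ≤ N₁) (hN2 : 3 < N₂) (hR : 0 < R)
    (hn : 1 ≤ n) (hnX : n + ℓ ≤ X) (hp : (n + ℓ).Prime)
    (hphi : Nat.totient n = Nat.totient (n + 2 * ℓ)) :
    n ∈ Nat.smoothNumbers N₁ ∨
    (∃ d, N₂ ≤ d ∧ d ^ 2 ∣ n) ∨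
    (∃ d, N₂ ≤ d ∧ d ^ 2 ∣ n + 2 * ℓ) ∨
    (∃ P, N₁ ≤ P ∧ P - 1 ∈ Nat.smoothNumbers N₂ ∧ P ∣ n) ∨
    (∃ r i j, N₂ ≤ r ∧ 1 ≤ i ∧ 1 ≤ j ∧ Nat.Coprime (1 + r * i) (1 + r * j) ∧
      1 + r * i ∣ n ∧ 1 + r * j ∣ n + 2 * ℓ ∧ (1 + r * i) * (1 + r * j) ≤ R) ∨
    (∃ a b P q, n = a * P ∧ n + 2 * ℓ = b * q ∧ 1 ≤ P ∧ 1 ≤ q ∧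
      Nat.totient a * (P - 1) = Nat.totient b * (q - 1) ∧
      a * b ≤ 2 * X ^ 2 / R ∧ b * Nat.totient a ≠ a * Nat.totient b) := by
  by_cases c1 : n ∈ Nat.smoothNumbers N₁
  · exact Or.inl c1
  by_cases c2 : ∃ d, N₂ ≤ d ∧ d ^ 2 ∣ n
  · exact Or.inr (Or.inl c2)
  by_cases c3 : ∃ d, N₂ ≤ d ∧ d ^ 2 ∣ n + 2 * ℓ
  · exact Or.inr (Or.inr (Or.inl c3))
  by_cases c4 : ∃ P, N₁ ≤ P ∧ P - 1 ∈ Nat.smoothNumbers N₂ ∧ P ∣ n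
  · exact Or.inr (Or.inr (Or.inr (Or.inl c4)))
  right; right; right; right
  push Not at c2 c3 c4
  rw [Nat.mem_smoothNumbers'] at c1
  push Not at c1
  obtain ⟨P, hP, hPn, hPN⟩ := c1
  have c4' := c4 P hPN
  have hP1 : ¬ (P - 1 ∈ Nat.smoothNumbers N₂) := fun h => c4' h hPn
  rw [Nat.mem_smoothNumbers'] at hP1
  push Not at hP1
  obtain ⟨r, hr, hrP, hrN⟩ := hP1
  obtain ⟨a, hna, hta⟩ := totient_split n P hP hPn (c2 P (by omega))
  have hrm : r ∣ Nat.totient (n + 2 * ℓ) := by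
    rw [← hphi, hta]; exact hrP.mul_left _
  rcases prime_dvd_totient r (n + 2 * ℓ) (by omega) hr hrm with h | ⟨q, hq, hqm, hrq⟩
  · exact absurd h (c3 r hrN)
  have hq2 := hq.two_le
  have hP2 := hP.two_le
  have hrq' : r ≤ q - 1 := Nat.le_of_dvd (by omega) hrq
  obtain ⟨b, hmb, htb⟩ := totient_split (n + 2 * ℓ) q hq hqm (c3 q (by omega))
  have hPq : Nat.Coprime P q := by
    rw [Nat.coprime_primes hP hq]
    rintro rfl
    have : P ∣ 2 * ℓ := by
      have := Nat.dvd_sub hqm hPn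
      rwa [Nat.add_sub_cancel_left] at this
    have := Nat.le_of_dvd (by omega) this
    omega
  by_cases hle : P * q ≤ R
  · left
    obtain ⟨i, hi⟩ := hrP
    obtain ⟨j, hj⟩ := hrq
    have ePi : 1 + r * i = P := by omega
    have eqj : 1 + r * j = q := by omega
    refine ⟨r, i, j, hrN, ?_, ?_, ?_, ?_, ?_, ?_⟩
    · rcases Nat.eq_zero_or_pos i with h | h
      · subst h; omega
      · exact h
    · rcases Nat.eq_zero_or_pos j with h | h
      · subst h; omega
      · exact h
    · rw [ePi, eqj]; exact hPq
    · rw [ePi]; exact hPn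
    · rw [eqj]; exact hqm
    · rw [ePi, eqj]; exact hle
  · right
    refine ⟨a, b, P, q, hna, hmb, by omega, by omega, by rw [← hta, hphi, htb], ?_, ?_⟩
    · rw [Nat.le_div_iff_mul_le hR]
      calc a * b * R ≤ a * b * (P * q) := Nat.mul_le_mul_left _ (by omega)
        _ = n * (n + 2 * ℓ) := by rw [hmb, hna]; ring
        _ ≤ X * (2 * X) := Nat.mul_le_mul (by omega) (by omega)
        _ = 2 * X ^ 2 := by ring
    · intro hdeg
      have ha : 0 < a := by
        rcases Nat.eq_zero_or_pos a with h | h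
        · subst h; omega
        · exact h
      exact degenerate_false ℓ a b P q hℓ h4 ha hP hq (by omega) (by omega)
        (by rw [← hna]; exact hp) (by rw [← hna]; exact hmb) (by rw [← hta, hphi, htb]) hdeg

lemma sum_inv_Icc_le (M : ℕ) : ∑ i ∈ Finset.Icc 1 M, (1 : ℝ) / i ≤ 1 + Real.log M := by
  have := harmonic_le_one_add_log M
  rw [harmonic_eq_sum_Icc] at this
  push_cast at this
  simpa [one_div] using this

/-- primes in a dyadic block -/
lemma dyadic_block (j : ℕ) (hj : 1 ≤ j) :
    ∑ p ∈ (Finset.Ico (2 ^ j) (2 ^ (j + 1))).filter Nat.Prime, (1 : ℝ) / p ≤ 4 / j := by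
  set s := (Finset.Ico (2 ^ j) (2 ^ (j + 1))).filter Nat.Prime with hs
  have hlog2 : 0 < Real.log 2 := Real.log_pos (by norm_num)
  have hj0 : (0 : ℝ) < j := by exact_mod_cast hj
  have h1 : (s.card : ℝ) * (j * Real.log 2) ≤ Real.log 4 * 2 ^ (j + 1) := by
    have hth := Chebyshev.theta_le_log4_mul_x (x := ((2 ^ (j + 1) : ℕ) : ℝ)) (by positivity)
    rw [Chebyshev.theta_eq_sum_primesLE_log] at hth
    have : (s.card : ℝ) * (j * Real.log 2) ≤ ∑ p ∈ s, Real.log p := by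
      rw [← nsmul_eq_mul]
      apply Finset.card_nsmul_le_sum
      intro p hp
      simp only [hs, Finset.mem_filter, Finset.mem_Ico] at hp
      have : Real.log ((2 : ℝ) ^ j) ≤ Real.log p :=
        Real.log_le_log (by positivity) (by exact_mod_cast hp.1.1)
      rwa [Real.log_pow] at this
    refine this.trans (le_trans ?_ (hth.trans (by push_cast; rfl)))
    apply Finset.sum_le_sum_of_subset_of_nonneg
    · intro p hp
      simp only [hs, Finset.mem_filter, Finset.mem_Ico] at hp
      simp only [Nat.primesLE, Nat.mem_primesBelow]
      exact ⟨by omega, hp.2⟩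
    · intro p _ _
      exact Real.log_natCast_nonneg p
  have hl4 : Real.log 4 = 2 * Real.log 2 := by
    rw [show (4 : ℝ) = 2 ^ 2 by norm_num, Real.log_pow]; norm_num
  have h2 : (s.card : ℝ) * j ≤ 4 * 2 ^ j := by
    rw [hl4, pow_succ] at h1
    have : ((s.card : ℝ) * j) * Real.log 2 ≤ (4 * 2 ^ j) * Real.log 2 := by nlinarith
    exact le_of_mul_le_mul_right this hlog2
  calc ∑ p ∈ s, (1 : ℝ) / p ≤ s.card • (1 / (2 : ℝ) ^ j) := by
        apply Finset.sum_le_card_nsmul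
        intro p hp
        simp only [hs, Finset.mem_filter, Finset.mem_Ico] at hp
        apply one_div_le_one_div_of_le (by positivity)
        exact_mod_cast hp.1.1
    _ = (s.card : ℝ) / 2 ^ j := by rw [nsmul_eq_mul]; ring
    _ ≤ 4 / j := by
        rw [div_le_div_iff₀ (by positivity) hj0]; exact h2

lemma sum_inv_primes_dyadic (J : ℕ) :
    ∑ p ∈ Nat.primesBelow (2 ^ (J + 1)), (1 : ℝ) / p ≤ 4 * ∑ j ∈ Finset.Icc 1 J, (1 : ℝ) / j := by
  induction J with
  | zero => simp [Nat.primesBelow_two]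
  | succ J ih =>
    have hsplit : Nat.primesBelow (2 ^ (J + 1 + 1)) ⊆ Nat.primesBelow (2 ^ (J + 1)) ∪
        (Finset.Ico (2 ^ (J + 1)) (2 ^ (J + 1 + 1))).filter Nat.Prime := by
      intro p hp
      simp only [Nat.mem_primesBelow, Finset.mem_union, Finset.mem_filter, Finset.mem_Ico] at hp ⊢
      by_cases h : p < 2 ^ (J + 1)
      · exact Or.inl ⟨h, hp.2⟩
      · exact Or.inr ⟨⟨by omega, hp.1⟩, hp.2⟩
    rw [Finset.sum_Icc_succ_top (by omega)]
    calc _ ≤ ∑ p ∈ Nat.primesBelow (2 ^ (J + 1)) ∪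
        (Finset.Ico (2 ^ (J + 1)) (2 ^ (J + 1 + 1))).filter Nat.Prime, (1 : ℝ) / p :=
          Finset.sum_le_sum_of_subset_of_nonneg hsplit (fun _ _ _ => by positivity)
      _ = ∑ p ∈ Nat.primesBelow (2 ^ (J + 1)), (1 : ℝ) / p +
        ∑ p ∈ (Finset.Ico (2 ^ (J + 1)) (2 ^ (J + 1 + 1))).filter Nat.Prime, (1 : ℝ) / p := by
          apply Finset.sum_union
          rw [Finset.disjoint_left]
          intro p hp hp'
          simp only [Nat.mem_primesBelow, Finset.mem_filter, Finset.mem_Ico] at hp hp'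
          omega
      _ ≤ _ := by
          have := dyadic_block (J + 1) (by omega)
          rw [mul_add]
          refine add_le_add ih (this.trans (le_of_eq ?_))
          ring

lemma sum_inv_primes_le (N : ℕ) (B : ℝ) (hN : 1 ≤ N) (hB : 1 ≤ B) (hNB : Real.log N ≤ B) :
    ∑ p ∈ Nat.primesBelow N, (1 : ℝ) / p ≤ 4 * (1 + Real.log (2 * B)) := by
  set J := Nat.log 2 N with hJ
  have h1 : N < 2 ^ (J + 1) := Nat.lt_pow_succ_log_self (by norm_num) N
  have h2 : 2 ^ J ≤ N := Nat.pow_log_le_self 2 (by omega)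
  have hJB : (J : ℝ) ≤ 2 * B := by
    have : Real.log ((2 : ℝ) ^ J) ≤ Real.log N :=
      Real.log_le_log (by positivity) (by exact_mod_cast h2)
    rw [Real.log_pow] at this
    have := Real.log_two_gt_d9
    have : (0 : ℝ) ≤ J := by positivity
    nlinarith
  calc _ ≤ ∑ p ∈ Nat.primesBelow (2 ^ (J + 1)), (1 : ℝ) / p := by
        apply Finset.sum_le_sum_of_subset_of_nonneg
        · intro p hp
          rw [Nat.mem_primesBelow] at hp ⊢
          exact ⟨by omega, hp.2⟩
        · intro _ _ _; positivity
    _ ≤ 4 * ∑ j ∈ Finset.Icc 1 J, (1 : ℝ) / j := sum_inv_primes_dyadic J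
    _ ≤ 4 * (1 + Real.log J) := by gcongr; exact sum_inv_Icc_le J
    _ ≤ 4 * (1 + Real.log (2 * B)) := by
        rcases Nat.eq_zero_or_pos J with h | h
        · rw [h]; simp only [Nat.cast_zero, Real.log_zero]
          have : 0 ≤ Real.log (2 * B) := Real.log_nonneg (by linarith)
          linarith
        · gcongr

/-- Rankin's bound for tails of reciprocal sums of smooth numbers. -/
lemma rankin (N : ℕ) (B c w : ℝ) (F : Finset ℕ) (hN : 1 ≤ N) (hB : 1 ≤ B) (hc : 0 < c)
    (hcB : 2 * c ≤ B) (hNB : Real.log N ≤ B) (hw : 0 < w)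
    (hF : ∀ n ∈ F, n ∈ Nat.smoothNumbers N ∧ w ≤ n) :
    ∑ n ∈ F, (1 : ℝ) / n ≤
      Real.exp (-(c * Real.log w / B)) * Real.exp (16 * Real.exp c * (1 + Real.log (2 * B))) := by
  have hB0 : 0 < B := by linarith
  set η := c / B with hη
  have hη0 : 0 < η := by positivity
  have hη2 : η ≤ 1 / 2 := by rw [hη, div_le_iff₀ hB0]; linarith
  let f : ℕ →* ℝ :=
    { toFun := fun n => (n : ℝ) ^ (-(1 - η))
      map_one' := by simp
      map_mul' := fun m n => by
        push_cast
        exact Real.mul_rpow (by positivity) (by positivity) }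
  have hf : ∀ n : ℕ, f n = (n : ℝ) ^ (-(1 - η)) := fun _ => rfl
  have hf0 : ∀ n : ℕ, 0 ≤ f n := fun n => by rw [hf]; positivity
  have hfp : ∀ p : ℕ, p.Prime → f p ≤ 3 / 4 := by
    intro p hp
    have h2 : (2 : ℝ) ≤ p := by exact_mod_cast hp.two_le
    rw [hf]
    calc (p : ℝ) ^ (-(1 - η)) ≤ (2 : ℝ) ^ (-(1 - η)) :=
          Real.rpow_le_rpow_of_nonpos (by norm_num) h2 (by linarith)
      _ ≤ (2 : ℝ) ^ (-(1 / 2 : ℝ)) :=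
          Real.rpow_le_rpow_of_exponent_le (by norm_num) (by linarith)
      _ ≤ 3 / 4 := by
          rw [Real.rpow_neg (by norm_num), ← Real.sqrt_eq_rpow, inv_le_comm₀ (by positivity) (by norm_num)]
          apply Real.le_sqrt_of_sq_le; norm_num
  have hsum := (EulerProduct.summable_and_hasSum_smoothNumbers_prod_primesBelow_geometric
    (f := f) (fun {p} hp => by
      rw [Real.norm_of_nonneg (hf0 p)]; linarith [hfp p hp]) N).2
  have hprod : ∏ p ∈ N.primesBelow, (1 - f p)⁻¹ ≤
      Real.exp (16 * Real.exp c * (1 + Real.log (2 * B))) := by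
    calc ∏ p ∈ N.primesBelow, (1 - f p)⁻¹
        ≤ ∏ p ∈ N.primesBelow, Real.exp (4 * Real.exp c * (1 / p)) := by
          apply Finset.prod_le_prod
          · intro p hp
            have := hfp p (Nat.prime_of_mem_primesBelow hp)
            exact inv_nonneg.mpr (by linarith)
          · intro p hp
            have hpp := Nat.prime_of_mem_primesBelow hp
            have h34 := hfp p hpp
            have h0 := hf0 p
            have hp0 : (0 : ℝ) < p := by exact_mod_cast hpp.pos
            have hle : f p ≤ Real.exp c * (1 / p) := by
              rw [hf, neg_sub, Real.rpow_sub hp0, Real.rpow_one, mul_one_div]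
              apply div_le_div_of_nonneg_right _ hp0.le
              rw [Real.rpow_def_of_pos hp0]
              apply Real.exp_le_exp.mpr
              have hlog : Real.log p ≤ B := by
                refine le_trans (Real.log_le_log hp0 ?_) hNB
                exact_mod_cast (Nat.lt_of_mem_primesBelow hp).le
              calc Real.log p * η ≤ B * η := by gcongr
                _ = c := by rw [hη]; field_simp
            calc (1 - f p)⁻¹ ≤ 1 + 4 * f p := by
                  rw [inv_le_iff_one_le_mul₀ (by linarith)]
                  nlinarith
              _ ≤ Real.exp (4 * f p) := by linarith [Real.add_one_le_exp (4 * f p)]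
              _ ≤ _ := by
                  apply Real.exp_le_exp.mpr
                  linarith
      _ = Real.exp (4 * Real.exp c * ∑ p ∈ N.primesBelow, (1 : ℝ) / p) := by
          rw [← Real.exp_sum, Finset.mul_sum]
      _ ≤ _ := by
          apply Real.exp_le_exp.mpr
          have := sum_inv_primes_le N B hN hB hNB
          calc _ ≤ 4 * Real.exp c * (4 * (1 + Real.log (2 * B))) := by gcongr
            _ = _ := by ring
  have hFsum : ∑ n ∈ F, f n ≤ ∏ p ∈ N.primesBelow, (1 - f p)⁻¹ := by
    have e : ∑ n ∈ F, f n = ∑ n ∈ F.attach.image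
        (fun n => (⟨n.1, (hF n.1 n.2).1⟩ : N.smoothNumbers)), f (n : ℕ) := by
      rw [Finset.sum_image]
      · exact (Finset.sum_attach F (fun n => f n)).symm
      · intro a _ b _ hab
        simp only [Subtype.mk.injEq] at hab
        exact Subtype.ext hab
    rw [e]
    exact sum_le_hasSum _ (fun n _ => hf0 n) hsum
  calc ∑ n ∈ F, (1 : ℝ) / n ≤ ∑ n ∈ F, Real.exp (-(c * Real.log w / B)) * f n := by
        apply Finset.sum_le_sum
        intro n hn
        have hwn := (hF n hn).2
        have hn0 : (0 : ℝ) < n := by linarith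
        rw [hf, neg_sub, Real.rpow_sub hn0, Real.rpow_one, mul_div_assoc']
        apply div_le_div_of_nonneg_right _ hn0.le
        rw [Real.rpow_def_of_pos hn0, ← Real.exp_add, Real.one_le_exp_iff]
        have hl : Real.log w ≤ Real.log n := Real.log_le_log hw hwn
        have : Real.log w * η ≤ Real.log n * η := by gcongr
        have e : c * Real.log w / B = Real.log w * η := by rw [hη]; ring
        rw [e]; linarith
    _ = Real.exp (-(c * Real.log w / B)) * ∑ n ∈ F, f n := by rw [Finset.mul_sum]
    _ ≤ _ := by gcongr; exact hFsum.trans hprod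

lemma count_dvd (M : ℕ) (S Ds : Finset ℕ)
    (h : ∀ n ∈ S, 1 ≤ n ∧ n ≤ M ∧ ∃ d ∈ Ds, d ∣ n) :
    (S.card : ℝ) ≤ M * ∑ d ∈ Ds, (1 : ℝ) / d := by
  have hsub : S ⊆ Ds.biUnion (fun d => (Finset.Ioc 0 M).filter (fun x => d ∣ x)) := by
    intro n hn
    obtain ⟨h1, h2, d, hd, hdn⟩ := h n hn
    simp only [Finset.mem_biUnion, Finset.mem_filter, Finset.mem_Ioc]
    exact ⟨d, hd, ⟨by omega, h2⟩, hdn⟩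
  have h1 : S.card ≤ ∑ d ∈ Ds, M / d := by
    refine (Finset.card_le_card hsub).trans (Finset.card_biUnion_le.trans ?_)
    apply Finset.sum_le_sum
    intro d _
    rw [Nat.Ioc_filter_dvd_card_eq_div]
  calc (S.card : ℝ) ≤ ((∑ d ∈ Ds, M / d : ℕ) : ℝ) := by exact_mod_cast h1
    _ = ∑ d ∈ Ds, ((M / d : ℕ) : ℝ) := by push_cast; rfl
    _ ≤ ∑ d ∈ Ds, (M : ℝ) * (1 / d) := by
        apply Finset.sum_le_sum
        intro d _
        rw [mul_one_div]
        exact Nat.cast_div_le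
    _ = _ := by rw [Finset.mul_sum]

lemma sum_inv_sq_tail (D M : ℕ) (hD : 1 ≤ D) :
    ∑ d ∈ Finset.Icc D M, (1 : ℝ) / (d : ℝ) ^ 2 ≤ 2 / D := by
  have h := sum_Ioo_inv_sq_le (α := ℝ) (D - 1) (M + 1)
  have e : Finset.Icc D M = Finset.Ioo (D - 1) (M + 1) := by
    ext i; simp only [Finset.mem_Icc, Finset.mem_Ioo]; omega
  rw [e]
  have e2 : ((D - 1 : ℕ) : ℝ) + 1 = D := by exact_mod_cast (by omega : D - 1 + 1 = D)
  rw [e2] at h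
  simpa [one_div] using h

lemma count_sq (M D : ℕ) (hD : 1 ≤ D) (S : Finset ℕ)
    (h : ∀ n ∈ S, 1 ≤ n ∧ n ≤ M ∧ ∃ d, D ≤ d ∧ d ^ 2 ∣ n) :
    (S.card : ℝ) ≤ M * (2 / D) := by
  have h1 := count_dvd M S ((Finset.Icc D M).image (fun d => d ^ 2)) (by
    intro n hn
    obtain ⟨h1, h2, d, hd, hdn⟩ := h n hn
    refine ⟨h1, h2, d ^ 2, ?_, hdn⟩
    apply Finset.mem_image_of_mem
    rw [Finset.mem_Icc]
    refine ⟨hd, ?_⟩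
    have := Nat.le_of_dvd (by omega) hdn
    nlinarith)
  refine h1.trans ?_
  gcongr
  rw [Finset.sum_image (by
    intro a _ b _ hab
    exact Nat.pow_left_injective (n := 2) (by norm_num) hab)]
  push_cast
  exact sum_inv_sq_tail D M hD

lemma count_smooth (M N : ℕ) (B c w : ℝ) (hN : 1 ≤ N) (hB : 1 ≤ B) (hc : 0 < c)
    (hcB : 2 * c ≤ B) (hNB : Real.log N ≤ B) (hw : 0 < w) (S : Finset ℕ)
    (h : ∀ n ∈ S, 1 ≤ n ∧ n ≤ M ∧ n ∈ Nat.smoothNumbers N) :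
    (S.card : ℝ) ≤ w + M * (Real.exp (-(c * Real.log w / B)) *
      Real.exp (16 * Real.exp c * (1 + Real.log (2 * B)))) := by
  classical
  have hsplit := Finset.card_filter_add_card_filter_not (s := S) (fun n : ℕ => (n : ℝ) < w)
  have h1 : ((S.filter (fun n : ℕ => (n : ℝ) < w)).card : ℝ) ≤ w := by
    have hsub : S.filter (fun n : ℕ => (n : ℝ) < w) ⊆ Finset.Icc 1 ⌊w⌋₊ := by
      intro n hn
      rw [Finset.mem_filter] at hn
      rw [Finset.mem_Icc]
      exact ⟨(h n hn.1).1, Nat.le_floor hn.2.le⟩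
    have := Finset.card_le_card hsub
    rw [Nat.card_Icc, Nat.add_sub_cancel] at this
    exact (Nat.cast_le.mpr this).trans (Nat.floor_le hw.le)
  have h2 : ((S.filter (fun n : ℕ => ¬ (n : ℝ) < w)).card : ℝ) ≤
      M * ∑ n ∈ S.filter (fun n : ℕ => ¬ (n : ℝ) < w), (1 : ℝ) / n := by
    apply count_dvd
    intro n hn
    have hn' := (Finset.mem_filter.mp hn).1
    exact ⟨(h n hn').1, (h n hn').2.1, n, hn, dvd_rfl⟩
  have h3 := rankin N B c w (S.filter (fun n : ℕ => ¬ (n : ℝ) < w)) hN hB hc hcB hNB hw (by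
    intro n hn
    rw [Finset.mem_filter] at hn
    exact ⟨(h n hn.1).2.2, not_lt.mp hn.2⟩)
  have h4 : (S.card : ℝ) = ((S.filter (fun n : ℕ => (n : ℝ) < w)).card : ℝ) +
      ((S.filter (fun n : ℕ => ¬ (n : ℝ) < w)).card : ℝ) := by exact_mod_cast hsplit.symm
  rw [h4]
  refine add_le_add h1 (h2.trans ?_)
  gcongr

lemma count_shifted (M N₁ N : ℕ) (B c : ℝ) (hN : 1 ≤ N) (hB : 1 ≤ B) (hc : 0 < c)
    (hcB : 2 * c ≤ B) (hNB : Real.log N ≤ B) (hN1 : 2 ≤ N₁) (S : Finset ℕ)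
    (h : ∀ n ∈ S, 1 ≤ n ∧ n ≤ M ∧ ∃ P, N₁ ≤ P ∧ P - 1 ∈ Nat.smoothNumbers N ∧ P ∣ n) :
    (S.card : ℝ) ≤ M * (Real.exp (-(c * Real.log (N₁ - 1 : ℕ) / B)) *
      Real.exp (16 * Real.exp c * (1 + Real.log (2 * B)))) := by
  classical
  set F := (Finset.Icc (N₁ - 1) M).filter (fun m => m ∈ Nat.smoothNumbers N) with hF
  have h1 := count_dvd M S (F.image (fun m => m + 1)) (by
    intro n hn
    obtain ⟨h1, h2, P, hP, hPs, hPn⟩ := h n hn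
    refine ⟨h1, h2, P, ?_, hPn⟩
    rw [Finset.mem_image]
    have := Nat.le_of_dvd (by omega) hPn
    refine ⟨P - 1, ?_, by omega⟩
    rw [hF, Finset.mem_filter, Finset.mem_Icc]
    exact ⟨by omega, hPs⟩)
  have hpos : (0 : ℝ) < (N₁ - 1 : ℕ) := by exact_mod_cast (by omega : 0 < N₁ - 1)
  have h3 := rankin N B c (N₁ - 1 : ℕ) F hN hB hc hcB hNB hpos (by
    intro n hn
    rw [hF, Finset.mem_filter, Finset.mem_Icc] at hn
    exact ⟨hn.2, by exact_mod_cast hn.1.1⟩)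
  refine h1.trans ?_
  gcongr
  refine le_trans ?_ h3
  rw [Finset.sum_image (by intro a _ b _ hab; simpa using hab)]
  apply Finset.sum_le_sum
  intro m hm
  rw [hF, Finset.mem_filter, Finset.mem_Icc] at hm
  have : (0 : ℝ) < m := by exact_mod_cast (by omega : 0 < m)
  apply one_div_le_one_div_of_le this
  push_cast; linarith

lemma count_crt (X k P Q : ℕ) (hPQ : Nat.Coprime P Q) (S : Finset ℕ)
    (h : ∀ n ∈ S, n ≤ X ∧ P ∣ n ∧ Q ∣ n + k) :
    S.card ≤ X / (P * Q) + 1 := by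
  rw [← Finset.card_range (X / (P * Q) + 1)]
  apply Finset.card_le_card_of_injOn (fun n => n / (P * Q))
  · intro n hn
    simp only [Finset.coe_range, Set.mem_Iio]
    exact Nat.lt_succ_of_le (Nat.div_le_div_right (h n hn).1)
  · intro a ha b hb hab
    simp only at hab
    obtain ⟨_, a1, a2⟩ := h a ha
    obtain ⟨_, b1, b2⟩ := h b hb
    have m1 : a ≡ b [MOD P] := ((Nat.modEq_zero_iff_dvd.mpr a1).trans
      (Nat.modEq_zero_iff_dvd.mpr b1).symm)
    have m2 : a ≡ b [MOD Q] := Nat.ModEq.add_right_cancel' k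
      ((Nat.modEq_zero_iff_dvd.mpr a2).trans (Nat.modEq_zero_iff_dvd.mpr b2).symm)
    have m3 : a ≡ b [MOD P * Q] := (Nat.modEq_and_modEq_iff_modEq_mul hPQ).mp ⟨m1, m2⟩
    rw [← Nat.div_add_mod a (P * Q), ← Nat.div_add_mod b (P * Q), hab, m3]

lemma count_pair (X k N R : ℕ) (hN : 1 ≤ N) (hk : k ≤ X) (hXR : X ≤ R) (S : Finset ℕ)
    (h : ∀ n ∈ S, 1 ≤ n ∧ n ≤ X ∧ ∃ r i j, N ≤ r ∧ 1 ≤ i ∧ 1 ≤ j ∧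
      Nat.Coprime (1 + r * i) (1 + r * j) ∧
      1 + r * i ∣ n ∧ 1 + r * j ∣ n + k ∧ (1 + r * i) * (1 + r * j) ≤ R) :
    (S.card : ℝ) ≤ 2 * R * ((2 / N) * (1 + Real.log (2 * X : ℕ)) ^ 2) := by
  classical
  set M := 2 * X with hM
  set I := (Finset.Icc N M) ×ˢ ((Finset.Icc 1 M) ×ˢ (Finset.Icc 1 M)) with hI
  set g : ℕ × ℕ × ℕ → Finset ℕ := fun t => S.filter (fun n =>
      Nat.Coprime (1 + t.1 * t.2.1) (1 + t.1 * t.2.2) ∧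
      1 + t.1 * t.2.1 ∣ n ∧ 1 + t.1 * t.2.2 ∣ n + k ∧
      (1 + t.1 * t.2.1) * (1 + t.1 * t.2.2) ≤ R) with hg
  have hsub : S ⊆ I.biUnion g := by
    intro n hn
    obtain ⟨h1, h2, r, i, j, hr, hi, hj, hc, d1, d2, hle⟩ := h n hn
    have l1 := Nat.le_of_dvd (by omega) d1
    have l2 := Nat.le_of_dvd (by omega) d2
    rw [Finset.mem_biUnion]
    refine ⟨(r, i, j), ?_, ?_⟩
    · simp only [hI, Finset.mem_product, Finset.mem_Icc]
      have : r ≤ r * i := Nat.le_mul_of_pos_right _ hi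
      have : i ≤ r * i := Nat.le_mul_of_pos_left _ (by omega)
      have : j ≤ r * j := Nat.le_mul_of_pos_left _ (by omega)
      omega
    · simp only [hg, Finset.mem_filter]
      exact ⟨hn, hc, d1, d2, hle⟩
  have hcard : ∀ t ∈ I, ((g t).card : ℝ) ≤
      2 * R * ((1 / (t.1 : ℝ) ^ 2) * ((1 / (t.2.1 : ℝ)) * (1 / (t.2.2 : ℝ)))) := by
    rintro ⟨r, i, j⟩ ht
    simp only [hI, Finset.mem_product, Finset.mem_Icc] at ht
    obtain ⟨⟨hr, _⟩, ⟨hi, _⟩, ⟨hj, _⟩⟩ := ht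
    have hr0 : (0 : ℝ) < r := by exact_mod_cast (by omega : 0 < r)
    have hi0 : (0 : ℝ) < i := by exact_mod_cast hi
    have hj0 : (0 : ℝ) < j := by exact_mod_cast hj
    by_cases hc : Nat.Coprime (1 + r * i) (1 + r * j) ∧ (1 + r * i) * (1 + r * j) ≤ R
    · have h1 := count_crt X k (1 + r * i) (1 + r * j) hc.1 (g (r, i, j)) (by
        intro n hn
        simp only [hg, Finset.mem_filter] at hn
        exact ⟨(h n hn.1).2.1, hn.2.2.1, hn.2.2.2.1⟩)
      have hd : (0 : ℝ) < (((1 + r * i) * (1 + r * j) : ℕ) : ℝ) := by positivity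
      calc ((g (r, i, j)).card : ℝ) ≤ ((X / ((1 + r * i) * (1 + r * j)) : ℕ) : ℝ) + 1 := by
            exact_mod_cast h1
        _ ≤ (X : ℝ) / (((1 + r * i) * (1 + r * j) : ℕ) : ℝ) + 1 := by
            gcongr; exact Nat.cast_div_le
        _ ≤ (R : ℝ) / (((1 + r * i) * (1 + r * j) : ℕ) : ℝ) +
            (R : ℝ) / (((1 + r * i) * (1 + r * j) : ℕ) : ℝ) := by
            gcongr
            rw [le_div_iff₀ hd, one_mul]; exact_mod_cast hc.2
        _ = 2 * R * (1 / (((1 + r * i) * (1 + r * j) : ℕ) : ℝ)) := by ring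
        _ ≤ 2 * R * (1 / ((r : ℝ) ^ 2 * (i * j))) := by
            gcongr
            push_cast
            nlinarith [mul_pos hr0 hi0, mul_pos hr0 hj0]
        _ = _ := by simp only; field_simp
    · have : g (r, i, j) = ∅ := by
        simp only [hg]
        rw [Finset.filter_eq_empty_iff]
        intro n _ hh
        exact hc ⟨hh.1, hh.2.2.2⟩
      rw [this, Finset.card_empty, Nat.cast_zero]
      positivity
  have hH := sum_inv_Icc_le M
  have hH0 : 0 ≤ ∑ i ∈ Finset.Icc 1 M, (1 : ℝ) / i := Finset.sum_nonneg (fun _ _ => by positivity)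
  calc (S.card : ℝ) ≤ ((∑ t ∈ I, (g t).card : ℕ) : ℝ) := by
        exact_mod_cast (Finset.card_le_card hsub).trans Finset.card_biUnion_le
    _ = ∑ t ∈ I, ((g t).card : ℝ) := by push_cast; rfl
    _ ≤ ∑ t ∈ I, 2 * R * ((1 / (t.1 : ℝ) ^ 2) * ((1 / (t.2.1 : ℝ)) * (1 / (t.2.2 : ℝ)))) :=
        Finset.sum_le_sum hcard
    _ = 2 * R * ((∑ r ∈ Finset.Icc N M, 1 / (r : ℝ) ^ 2) *
        ((∑ i ∈ Finset.Icc 1 M, (1 : ℝ) / i) * (∑ i ∈ Finset.Icc 1 M, (1 : ℝ) / i))) := by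
        rw [← Finset.mul_sum, Finset.sum_mul_sum, ← Finset.sum_product', Finset.sum_mul_sum,
          ← Finset.sum_product']
    _ ≤ 2 * R * ((2 / N) * ((1 + Real.log M) * (1 + Real.log M))) := by
        have := sum_inv_sq_tail N M hN
        have : 0 ≤ 1 + Real.log (M : ℝ) := hH0.trans hH
        gcongr
    _ = _ := by ring

lemma count_unique (k T : ℕ) (S : Finset ℕ)
    (h : ∀ n ∈ S, 1 ≤ n ∧ ∃ a b P q, n = a * P ∧ n + k = b * q ∧ 1 ≤ P ∧ 1 ≤ q ∧
      Nat.totient a * (P - 1) = Nat.totient b * (q - 1) ∧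
      a * b ≤ T ∧ b * Nat.totient a ≠ a * Nat.totient b) :
    (S.card : ℝ) ≤ T * (1 + Real.log T) := by
  classical
  choose! h1 a b P q hn hk hP hq ht hT hne using h
  set I := (Finset.Icc 1 T).sigma (fun a => Finset.Icc 1 (T / a)) with hI
  have hle : S.card ≤ I.card := by
    apply Finset.card_le_card_of_injOn (fun n => (⟨a n, b n⟩ : (_ : ℕ) × ℕ))
    · intro n hnS
      have ha : 0 < a n := by
        rcases Nat.eq_zero_or_pos (a n) with h0 | h0
        · have := hn n hnS; rw [h0, zero_mul] at this; have := h1 n hnS; omega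
        · exact h0
      have hb : 0 < b n := by
        rcases Nat.eq_zero_or_pos (b n) with h0 | h0
        · have := hk n hnS; rw [h0, zero_mul] at this; have := h1 n hnS; omega
        · exact h0
      have hT' := hT n hnS
      simp only [hI, Finset.coe_sigma, Set.mem_sigma_iff, Finset.coe_Icc, Set.mem_Icc]
      refine ⟨⟨ha, le_trans (Nat.le_mul_of_pos_right _ hb) hT'⟩, hb, ?_⟩
      rw [Nat.le_div_iff_mul_le ha]; linarith
    · intro n hnS m hmS hnm
      simp only [Sigma.mk.injEq, heq_eq_eq] at hnm
      obtain ⟨ea, eb⟩ := hnm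
      have hne1 := hne n hnS
      have t1 := ht n hnS
      have t2 := ht m hmS
      have n1 := hn n hnS
      have n2 := hn m hmS
      have k1 := hk n hnS
      have k2 := hk m hmS
      have P1 := hP n hnS
      have P2 := hP m hmS
      have q1 := hq n hnS
      have q2 := hq m hmS
      rw [← ea, ← eb] at t2
      rw [← ea] at n2
      rw [← eb] at k2
      generalize a n = A at *
      generalize b n = B at *
      have e1 : ((P n : ℤ) - P m) * (B * Nat.totient A - A * Nat.totient B) = 0 := by
        obtain ⟨u, hu⟩ : ∃ u, P n = u + 1 := ⟨P n - 1, by omega⟩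
        obtain ⟨v, hv⟩ : ∃ v, P m = v + 1 := ⟨P m - 1, by omega⟩
        obtain ⟨s, hs⟩ : ∃ s, q n = s + 1 := ⟨q n - 1, by omega⟩
        obtain ⟨t, htt⟩ : ∃ t, q m = t + 1 := ⟨q m - 1, by omega⟩
        rw [hu, hs] at t1
        rw [hv, htt] at t2
        have n1' : (n : ℤ) = A * (u + 1) := by rw [hu] at n1; exact_mod_cast n1
        have n2' : (m : ℤ) = A * (v + 1) := by rw [hv] at n2; exact_mod_cast n2
        rw [hs] at k1
        rw [htt] at k2
        rw [hu, hv]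
        simp only [Nat.add_sub_cancel] at t1 t2
        zify at t1 t2 k1 k2
        push_cast
        linear_combination (B : ℤ) * t1 - (B : ℤ) * t2 - (Nat.totient B : ℤ) * k1
          + (Nat.totient B : ℤ) * k2 + (Nat.totient B : ℤ) * n1' - (Nat.totient B : ℤ) * n2'
      rcases mul_eq_zero.mp e1 with h0 | h0
      · have : P n = P m := by exact_mod_cast (sub_eq_zero.mp h0)
        rw [n1, n2, this]
      · exfalso
        apply hne1
        exact_mod_cast (sub_eq_zero.mp h0)
  have hIc : (I.card : ℝ) ≤ T * ∑ a ∈ Finset.Icc 1 T, (1 : ℝ) / a := by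
    rw [hI, Finset.card_sigma]
    push_cast
    rw [Finset.mul_sum]
    apply Finset.sum_le_sum
    intro i _
    rw [Nat.card_Icc, Nat.add_sub_cancel, mul_one_div]
    exact Nat.cast_div_le
  refine (Nat.cast_le.mpr hle).trans (hIc.trans ?_)
  gcongr
  exact sum_inv_Icc_le T

lemma main_finite (ℓ X N₁ N₂ R : ℕ) (c B₁ B₂ w : ℝ) (hℓ : 0 < ℓ)
    (h4 : ¬ ∃ n : ℕ, 1 ≤ n ∧ ℓ = 4 ^ n - 1)
    (hX : 2 * ℓ ≤ X) (hN1 : 2 * ℓ < N₁) (hN12 : N₂ ≤ N₁) (hN2 : 3 < N₂) (hXR : X ≤ R)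
    (hc : 0 < c) (hB1 : 1 ≤ B₁) (hB2 : 1 ≤ B₂) (hcB1 : 2 * c ≤ B₁) (hcB2 : 2 * c ≤ B₂)
    (hNB1 : Real.log N₁ ≤ B₁) (hNB2 : Real.log N₂ ≤ B₂) (hw : 0 < w) (S : Finset ℕ)
    (hS : ∀ n ∈ S, 1 ≤ n ∧ n + ℓ ≤ X ∧ (n + ℓ).Prime ∧
      Nat.totient n = Nat.totient (n + 2 * ℓ)) :
    (S.card : ℝ) ≤
      (w + X * (Real.exp (-(c * Real.log w / B₁)) *
        Real.exp (16 * Real.exp c * (1 + Real.log (2 * B₁))))) +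
      (X * (2 / N₂) + ((2 * X : ℕ) * (2 / N₂) +
      (X * (Real.exp (-(c * Real.log (N₁ - 1 : ℕ) / B₂)) *
        Real.exp (16 * Real.exp c * (1 + Real.log (2 * B₂)))) +
      (2 * R * ((2 / N₂) * (1 + Real.log (2 * X : ℕ)) ^ 2) +
      (2 * X ^ 2 / R : ℕ) * (1 + Real.log (2 * X ^ 2 / R : ℕ)))))) := by
  classical
  have hR : 0 < R := by omega
  set p1 : ℕ → Prop := fun n => n ∈ Nat.smoothNumbers N₁ with hp1
  set p2 : ℕ → Prop := fun n => ∃ d, N₂ ≤ d ∧ d ^ 2 ∣ n with hp2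
  set p3 : ℕ → Prop := fun n => ∃ d, N₂ ≤ d ∧ d ^ 2 ∣ n + 2 * ℓ with hp3
  set p4 : ℕ → Prop := fun n => ∃ P, N₁ ≤ P ∧ P - 1 ∈ Nat.smoothNumbers N₂ ∧ P ∣ n with hp4
  set p5 : ℕ → Prop := fun n => ∃ r i j, N₂ ≤ r ∧ 1 ≤ i ∧ 1 ≤ j ∧
      Nat.Coprime (1 + r * i) (1 + r * j) ∧
      1 + r * i ∣ n ∧ 1 + r * j ∣ n + 2 * ℓ ∧ (1 + r * i) * (1 + r * j) ≤ R with hp5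
  set p6 : ℕ → Prop := fun n => ∃ a b P q, n = a * P ∧ n + 2 * ℓ = b * q ∧ 1 ≤ P ∧ 1 ≤ q ∧
      Nat.totient a * (P - 1) = Nat.totient b * (q - 1) ∧
      a * b ≤ 2 * X ^ 2 / R ∧ b * Nat.totient a ≠ a * Nat.totient b with hp6
  have hsub : S ⊆ S.filter p1 ∪ (S.filter p2 ∪ (S.filter p3 ∪ (S.filter p4 ∪
      (S.filter p5 ∪ S.filter p6)))) := by
    intro n hn
    obtain ⟨a1, a2, a3, a4⟩ := hS n hn
    have := cover ℓ X N₁ N₂ R n hℓ h4 hN1 hN12 hN2 hR a1 a2 a3 a4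
    simp only [Finset.mem_union, Finset.mem_filter]
    rcases this with h | h | h | h | h | h
    · exact Or.inl ⟨hn, h⟩
    · exact Or.inr (Or.inl ⟨hn, h⟩)
    · exact Or.inr (Or.inr (Or.inl ⟨hn, h⟩))
    · exact Or.inr (Or.inr (Or.inr (Or.inl ⟨hn, h⟩)))
    · exact Or.inr (Or.inr (Or.inr (Or.inr (Or.inl ⟨hn, h⟩))))
    · exact Or.inr (Or.inr (Or.inr (Or.inr (Or.inr ⟨hn, h⟩))))
  have hcard : S.card ≤ (S.filter p1).card + ((S.filter p2).card + ((S.filter p3).card +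
      ((S.filter p4).card + ((S.filter p5).card + (S.filter p6).card)))) := by
    refine (Finset.card_le_card hsub).trans ((Finset.card_union_le _ _).trans ?_)
    gcongr
    refine (Finset.card_union_le _ _).trans ?_
    gcongr
    refine (Finset.card_union_le _ _).trans ?_
    gcongr
    refine (Finset.card_union_le _ _).trans ?_
    gcongr
    exact Finset.card_union_le _ _
  have c1 := count_smooth X N₁ B₁ c w (by omega) hB1 hc hcB1 hNB1 hw (S.filter p1) (by
    intro n hn
    rw [Finset.mem_filter] at hn
    obtain ⟨a1, a2, a3, a4⟩ := hS n hn.1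
    exact ⟨a1, by omega, hn.2⟩)
  have c2 := count_sq X N₂ (by omega) (S.filter p2) (by
    intro n hn
    rw [Finset.mem_filter] at hn
    obtain ⟨a1, a2, a3, a4⟩ := hS n hn.1
    exact ⟨a1, by omega, hn.2⟩)
  have c3 := count_sq (2 * X) N₂ (by omega) ((S.filter p3).image (fun n => n + 2 * ℓ)) (by
    intro m hm
    rw [Finset.mem_image] at hm
    obtain ⟨n, hn, rfl⟩ := hm
    rw [Finset.mem_filter] at hn
    obtain ⟨a1, a2, a3, a4⟩ := hS n hn.1
    exact ⟨by omega, by omega, hn.2⟩)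
  rw [Finset.card_image_of_injective _ (add_left_injective (2 * ℓ))] at c3
  have c4 := count_shifted X N₁ N₂ B₂ c (by omega) hB2 hc hcB2 hNB2 (by omega) (S.filter p4) (by
    intro n hn
    rw [Finset.mem_filter] at hn
    obtain ⟨a1, a2, a3, a4⟩ := hS n hn.1
    exact ⟨a1, by omega, hn.2⟩)
  have c5 := count_pair X (2 * ℓ) N₂ R (by omega) hX hXR (S.filter p5) (by
    intro n hn
    rw [Finset.mem_filter] at hn
    obtain ⟨a1, a2, a3, a4⟩ := hS n hn.1
    exact ⟨a1, by omega, hn.2⟩)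
  have c6 := count_unique (2 * ℓ) (2 * X ^ 2 / R) (S.filter p6) (by
    intro n hn
    rw [Finset.mem_filter] at hn
    obtain ⟨a1, a2, a3, a4⟩ := hS n hn.1
    exact ⟨a1, hn.2⟩)
  have hcard' : (S.card : ℝ) ≤ (S.filter p1).card + ((S.filter p2).card + ((S.filter p3).card +
      ((S.filter p4).card + ((S.filter p5).card + ((S.filter p6).card : ℝ))))) := by
    exact_mod_cast hcard
  refine hcard'.trans ?_
  gcongr

/-- The asymptotic size conditions on `l = (log x)^(1/3)`. -/
lemma eventually_l (ℓ : ℕ) : ∀ᶠ l : ℝ in atTop, 16 ≤ l ∧ 2 * (ℓ : ℝ) + 2 ≤ l ∧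
    16 * Real.exp 8 * (1 + Real.log (2 * l ^ 2)) ≤ l / 2 ∧ (2 + l ^ 3) ^ 2 ≤ Real.exp l := by
  have e1 : ∀ᶠ l : ℝ in atTop, 16 * Real.exp 8 * (1 + Real.log (2 * l ^ 2)) ≤ l / 2 := by
    have h1 : (fun l : ℝ => Real.log l) =o[atTop] (fun l : ℝ => l) := Real.isLittleO_log_id_atTop
    set K := 16 * Real.exp 8 with hK
    have hK0 : 0 < K := by positivity
    have h2 := h1.bound (show (0 : ℝ) < 1 / (8 * K) by positivity)
    filter_upwards [h2, eventually_ge_atTop (1 : ℝ), eventually_ge_atTop (8 * K)]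
      with l hl hl1 hlK
    rw [Real.norm_of_nonneg (Real.log_nonneg hl1), Real.norm_of_nonneg (by linarith)] at hl
    have hlog : Real.log (2 * l ^ 2) = Real.log 2 + 2 * Real.log l := by
      rw [Real.log_mul (by norm_num) (by positivity), Real.log_pow]; norm_num
    have hlog2 : Real.log 2 ≤ 1 := by linarith [Real.log_two_lt_d9]
    rw [hlog]
    have : K * Real.log l ≤ l / 8 := by
      calc K * Real.log l ≤ K * (1 / (8 * K) * l) := by gcongr
        _ = l / 8 := by field_simp
    nlinarith
  have e2 : ∀ᶠ l : ℝ in atTop, (2 + l ^ 3) ^ 2 ≤ Real.exp l := by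
    have h1 := (Real.isLittleO_pow_exp_atTop (n := 7)).bound (show (0 : ℝ) < 1 by norm_num)
    filter_upwards [h1, eventually_ge_atTop (4 : ℝ)] with l hl hl4
    rw [Real.norm_of_nonneg (by positivity), Real.norm_of_nonneg (by positivity), one_mul] at hl
    refine le_trans ?_ hl
    have h3 : 2 ≤ l ^ 3 := by
      calc (2 : ℝ) ≤ 4 ^ 3 := by norm_num
        _ ≤ l ^ 3 := by gcongr
    calc (2 + l ^ 3) ^ 2 ≤ (l ^ 3 + l ^ 3) ^ 2 := by gcongr
      _ = 4 * l ^ 6 := by ring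
      _ ≤ l * l ^ 6 := by gcongr
      _ = l ^ 7 := by ring
  filter_upwards [e1, e2, eventually_ge_atTop (16 : ℝ), eventually_ge_atTop (2 * (ℓ : ℝ) + 2)]
    with l h1 h2 h3 h4
  exact ⟨h3, h4, h1, h2⟩

set_option maxHeartbeats 1000000 in
lemma main_analytic (ℓ : ℕ) (hℓ : 0 < ℓ) (h4 : ¬ ∃ n : ℕ, 1 ≤ n ∧ ℓ = 4 ^ n - 1)
    (l x : ℝ) (hx : x = Real.exp (l ^ 3)) (hl16 : 16 ≤ l) (hlℓ : 2 * (ℓ : ℝ) + 2 ≤ l)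
    (hK : 16 * Real.exp 8 * (1 + Real.log (2 * l ^ 2)) ≤ l / 2)
    (hE : (2 + l ^ 3) ^ 2 ≤ Real.exp l) (S : Finset ℕ)
    (hS : ∀ n ∈ S, 1 ≤ n ∧ n + ℓ ≤ ⌊x⌋₊ ∧ (n + ℓ).Prime ∧
      Nat.totient n = Nat.totient (n + 2 * ℓ)) :
    (S.card : ℝ) ≤ 40 * x / Real.exp l := by
  have hx0 : 0 < x := by rw [hx]; positivity
  have hl0 : 0 < l := by linarith
  have hexp_l : l ≤ Real.exp l := by linarith [Real.add_one_le_exp l]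
  have hl2 : 4 * l ≤ l ^ 2 := by nlinarith
  have hl3 : l ^ 2 ≤ l ^ 3 := by nlinarith [sq_nonneg l]
  set N₁ := ⌊Real.exp (l ^ 2)⌋₊ with hN₁
  set N₂ := ⌊Real.exp (4 * l)⌋₊ with hN₂
  set X := ⌊x⌋₊ with hX
  set R := ⌈x * Real.exp (2 * l)⌉₊ with hR
  have hfl : ∀ y : ℝ, l ≤ y → y - 1 ≤ Real.exp (y) - 1 ∧ Real.exp y - 1 < ⌊Real.exp y⌋₊ := by
    intro y hy
    exact ⟨by linarith [Real.add_one_le_exp y], by linarith [Nat.lt_floor_add_one (Real.exp y)]⟩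
  obtain ⟨f1, g1⟩ := hfl (l ^ 2) (by nlinarith)
  obtain ⟨f2, g2⟩ := hfl (4 * l) (by linarith)
  obtain ⟨f3, g3⟩ := hfl (l ^ 3) (by nlinarith)
  rw [← hN₁] at g1
  rw [← hN₂] at g2
  rw [← hx, ← hX] at g3
  have hN1 : 2 * ℓ < N₁ := by
    have : ((2 * ℓ : ℕ) : ℝ) < N₁ := by push_cast; nlinarith
    exact_mod_cast this
  have hXl : 2 * ℓ ≤ X := by
    have : ((2 * ℓ : ℕ) : ℝ) ≤ X := by push_cast; rw [hx] at g3; nlinarith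
    exact_mod_cast this
  have hN12 : N₂ ≤ N₁ := Nat.floor_le_floor (Real.exp_le_exp.mpr hl2)
  have hN2 : 3 < N₂ := by
    have : ((3 : ℕ) : ℝ) < N₂ := by push_cast; nlinarith
    exact_mod_cast this
  have hXx : (X : ℝ) ≤ x := Nat.floor_le hx0.le
  have hRx : x * Real.exp (2 * l) ≤ R := Nat.le_ceil _
  have hR0 : (0 : ℝ) < R := lt_of_lt_of_le (by positivity) hRx
  have h1e : 1 ≤ Real.exp (2 * l) := Real.one_le_exp (by linarith)
  have hXR : X ≤ R := by
    have : (X : ℝ) ≤ R := hXx.trans (le_trans (by nlinarith) hRx)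
    exact_mod_cast this
  have hx1 : 1 ≤ x := by rw [hx]; exact Real.one_le_exp (by positivity)
  have hRx2 : (R : ℝ) ≤ 2 * x * Real.exp (2 * l) := by
    have := (Nat.ceil_lt_add_one (show 0 ≤ x * Real.exp (2 * l) by positivity)).le
    rw [← hR] at this
    nlinarith
  have hlogf : ∀ y : ℝ, 0 ≤ y → Real.log ⌊Real.exp y⌋₊ ≤ y := by
    intro y hy
    have h0 : (0 : ℝ) < ⌊Real.exp y⌋₊ := by
      exact_mod_cast Nat.floor_pos.mpr (Real.one_le_exp hy)
    rw [Real.log_le_iff_le_exp h0]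
    exact Nat.floor_le (by positivity)
  have hmain := main_finite ℓ X N₁ N₂ R 8 (l ^ 2) (4 * l) (x / Real.exp l) hℓ h4 hXl hN1 hN12 hN2
    hXR (by norm_num) (by nlinarith) (by linarith) (by nlinarith) (by linarith)
    (hlogf _ (by positivity)) (hlogf _ (by positivity)) (by positivity) S hS
  -- common notation
  set L := Real.exp l with hL
  have hL0 : 0 < L := by positivity
  have hL1 : 1 ≤ L := Real.one_le_exp (by linarith)
  have hxL : 0 < x / L := by positivity
  have eneg : Real.exp (-l) = 1 / L := by rw [Real.exp_neg, one_div]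
  have e2l : Real.exp (2 * l) = L ^ 2 := by rw [hL, ← Real.exp_nat_mul]; norm_num
  have e4l : Real.exp (4 * l) = L ^ 4 := by rw [hL, ← Real.exp_nat_mul]; norm_num
  have hN2L : L ^ 4 / 2 ≤ N₂ := by
    rw [e4l] at g2
    have : 2 ≤ L ^ 4 := by rw [← e4l]; linarith
    linarith
  have hinvN2 : 2 / (N₂ : ℝ) ≤ 4 / L ^ 4 := by
    rw [div_le_div_iff₀ (by exact_mod_cast (by omega : 0 < N₂)) (by positivity)]
    linarith
  have hinvN2' : 2 / (N₂ : ℝ) ≤ 4 / L := by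
    refine hinvN2.trans ?_
    apply div_le_div_of_nonneg_left (by norm_num) hL0
    exact le_self_pow₀ hL1 (by norm_num)
  have hlogx : Real.log x = l ^ 3 := by rw [hx, Real.log_exp]
  have hX1 : 1 ≤ X := by omega
  have hlog2X : 1 + Real.log (2 * X : ℕ) ≤ 2 + l ^ 3 := by
    have : Real.log (2 * X : ℕ) ≤ Real.log (2 * x) := by
      apply Real.log_le_log
      · exact_mod_cast (by omega : 0 < 2 * X)
      · push_cast; linarith
    rw [Real.log_mul (by norm_num) hx0.ne', hlogx] at this
    linarith [Real.log_two_lt_d9]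
  have hlog0 : 0 ≤ 1 + Real.log (2 * X : ℕ) := by
    have := Real.log_natCast_nonneg (2 * X); linarith
  have hl30 : 0 ≤ l ^ 3 := by positivity
  -- term 1
  have t1 : X * (Real.exp (-(8 * Real.log (x / L) / l ^ 2)) *
        Real.exp (16 * Real.exp 8 * (1 + Real.log (2 * l ^ 2)))) ≤ x / L := by
    rw [← Real.exp_add, Real.log_div hx0.ne' hL0.ne', hlogx, hL, Real.log_exp, ← hL,
      div_eq_mul_one_div x L, ← eneg]
    gcongr
    have e : 8 * (l ^ 3 - l) / l ^ 2 = 8 * l - 8 / l := by field_simp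
    rw [e]
    have : 8 / l ≤ 1 := by rw [div_le_one hl0]; linarith
    linarith
  have t4 : X * (Real.exp (-(8 * Real.log (N₁ - 1 : ℕ) / (4 * l))) *
        Real.exp (16 * Real.exp 8 * (1 + Real.log (2 * (4 * l))))) ≤ x / L := by
    rw [← Real.exp_add, div_eq_mul_one_div x L, ← eneg]
    gcongr
    have hN1l : l ^ 2 - 1 ≤ Real.log (N₁ - 1 : ℕ) := by
      have hcast : ((N₁ - 1 : ℕ) : ℝ) = N₁ - 1 := by
        rw [Nat.cast_sub (by omega)]; norm_num
      have hpos : (0 : ℝ) < (N₁ - 1 : ℕ) := by exact_mod_cast (by omega : 0 < N₁ - 1)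
      rw [Real.le_log_iff_exp_le hpos, hcast]
      have h2 : Real.exp (l ^ 2 - 1) * 2 ≤ Real.exp (l ^ 2) := by
        have : Real.exp (l ^ 2) = Real.exp (l ^ 2 - 1) * Real.exp 1 := by
          rw [← Real.exp_add]; ring_nf
        rw [this]
        gcongr
        linarith [Real.exp_one_gt_d9]
      have h3 : l ^ 2 - 1 + 1 ≤ Real.exp (l ^ 2 - 1) := Real.add_one_le_exp _
      linarith
    have h8 : 16 * Real.exp 8 * (1 + Real.log (2 * (4 * l))) ≤ l / 2 := by
      refine le_trans ?_ hK
      have hlg : Real.log (2 * (4 * l)) ≤ Real.log (2 * l ^ 2) :=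
        Real.log_le_log (by positivity) (by linarith)
      exact mul_le_mul_of_nonneg_left (by linarith) (by positivity)
    have h9 : 2 * l - 1 ≤ 8 * Real.log (N₁ - 1 : ℕ) / (4 * l) := by
      rw [le_div_iff₀ (by positivity)]
      have : (2 * l - 1) * (4 * l) = 8 * l ^ 2 - 4 * l := by ring
      linarith
    linarith
  have t2 : X * (2 / (N₂ : ℝ)) ≤ 4 * (x / L) := by
    calc X * (2 / (N₂ : ℝ)) ≤ x * (4 / L) := by gcongr
      _ = _ := by ring
  have t3 : ((2 * X : ℕ) : ℝ) * (2 / (N₂ : ℝ)) ≤ 8 * (x / L) := by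
    push_cast
    linarith
  have t5 : 2 * R * ((2 / (N₂ : ℝ)) * (1 + Real.log (2 * X : ℕ)) ^ 2) ≤ 16 * (x / L) := by
    calc 2 * R * ((2 / (N₂ : ℝ)) * (1 + Real.log (2 * X : ℕ)) ^ 2)
        ≤ 2 * (2 * x * L ^ 2) * ((4 / L ^ 4) * L) := by
          rw [e2l] at hRx2
          have : (1 + Real.log (2 * X : ℕ)) ^ 2 ≤ L :=
            le_trans (by gcongr) hE
          gcongr
      _ = _ := by field_simp; ring
  have t6 : ((2 * X ^ 2 / R : ℕ) : ℝ) * (1 + Real.log (2 * X ^ 2 / R : ℕ)) ≤ 2 * (x / L) := by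
    have hT : ((2 * X ^ 2 / R : ℕ) : ℝ) ≤ 2 * x / L ^ 2 := by
      calc ((2 * X ^ 2 / R : ℕ) : ℝ) ≤ ((2 * X ^ 2 : ℕ) : ℝ) / R := Nat.cast_div_le
        _ = 2 * (X : ℝ) ^ 2 / R := by push_cast; rfl
        _ ≤ 2 * x ^ 2 / (x * L ^ 2) := by rw [← e2l]; gcongr
        _ = _ := by field_simp
    have hT2 : 2 * X ^ 2 / R ≤ 2 * X := by
      apply Nat.div_le_of_le_mul
      nlinarith
    have hlogT : 1 + Real.log (2 * X ^ 2 / R : ℕ) ≤ L := by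
      have h1 : Real.log (2 * X ^ 2 / R : ℕ) ≤ Real.log (2 * X : ℕ) := by
        rcases Nat.eq_zero_or_pos (2 * X ^ 2 / R) with h | h
        · rw [h, Nat.cast_zero, Real.log_zero]; exact Real.log_natCast_nonneg _
        · exact Real.log_le_log (by exact_mod_cast h) (by exact_mod_cast hT2)
      have h2 : 2 + l ^ 3 ≤ (2 + l ^ 3) ^ 2 := by nlinarith
      linarith
    calc _ ≤ 2 * x / L ^ 2 * L := by
          gcongr
      _ = _ := by field_simp
  have : 40 * x / L = 40 * (x / L) := by ring
  rw [this]
  linarith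

theorem phi_equal_count_generic (ℓ : ℕ) (hℓ : 0 < ℓ)
    (h4 : ¬ ∃ n : ℕ, 1 ≤ n ∧ ℓ = 4 ^ n - 1) :
    ∃ C : ℝ, 0 < C ∧ ∀ᶠ x : ℝ in atTop,
      ({p : ℕ | p.Prime ∧ (p : ℝ) ≤ x ∧ ℓ < p ∧
          Nat.totient (p - ℓ) = Nat.totient (p + ℓ)}.ncard : ℝ) ≤
        C * x / Real.exp ((Real.log x) ^ ((1 : ℝ) / 3)) := by
  refine ⟨40, by norm_num, ?_⟩
  have htend : Tendsto (fun x : ℝ => (Real.log x) ^ ((1 : ℝ) / 3)) atTop atTop :=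
    (tendsto_rpow_atTop (by norm_num)).comp Real.tendsto_log_atTop
  filter_upwards [htend.eventually (eventually_l ℓ), eventually_ge_atTop (1 : ℝ)] with x hl hx1
  obtain ⟨h16, hlℓ, hK, hE⟩ := hl
  set l := (Real.log x) ^ ((1 : ℝ) / 3) with hldef
  have hlog : 0 ≤ Real.log x := Real.log_nonneg hx1
  have hl3 : l ^ 3 = Real.log x := by
    rw [hldef, ← Real.rpow_natCast, ← Real.rpow_mul hlog]; norm_num
  have hx : x = Real.exp (l ^ 3) := by rw [hl3, Real.exp_log (by linarith)]
  classical
  set S := (Finset.Icc 1 ⌊x⌋₊).filter (fun n => n + ℓ ≤ ⌊x⌋₊ ∧ (n + ℓ).Prime ∧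
      Nat.totient n = Nat.totient (n + 2 * ℓ)) with hS
  have hmain := main_analytic ℓ hℓ h4 l x hx h16 hlℓ hK hE S (by
    intro n hn
    rw [hS, Finset.mem_filter, Finset.mem_Icc] at hn
    exact ⟨hn.1.1, hn.2⟩)
  have hsub : {p : ℕ | p.Prime ∧ (p : ℝ) ≤ x ∧ ℓ < p ∧
      Nat.totient (p - ℓ) = Nat.totient (p + ℓ)} ⊆ (S.image (fun n => n + ℓ) : Finset ℕ) := by
    rintro p ⟨hp, hpx, hlp, hphi⟩
    have hpf : p ≤ ⌊x⌋₊ := Nat.le_floor hpx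
    rw [Finset.mem_coe, Finset.mem_image]
    refine ⟨p - ℓ, ?_, by omega⟩
    rw [hS, Finset.mem_filter, Finset.mem_Icc]
    have e1 : p - ℓ + ℓ = p := by omega
    have e2 : p - ℓ + 2 * ℓ = p + ℓ := by omega
    rw [e1, e2]
    exact ⟨⟨by omega, by omega⟩, hpf, hp, hphi⟩
  have hc := Set.ncard_le_ncard hsub (Finset.finite_toSet _)
  rw [Set.ncard_coe_finset] at hc
  have hc' := hc.trans Finset.card_image_le
  exact (Nat.cast_le.mpr hc').trans hmain
end
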